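/- (Convergence Result 1.) Assume H_i(x,p) = F_i(x,p) − f_i(x) with F_i, f_i satisfying (A1)–(A5). Then for any continuous initial data (u₀₁, u₀₂) on 𝕋^n there exists a viscosity solution (v₁, v₂) ∈ C(𝕋^n)² of the ergodic problem (E) with ergodic constant c = 0 such that the viscosity solution (u₁, u₂) of (C) satisfies u_i(·,t) → v_i uniformly on 𝕋^n as t → ∞, for i = 1,2. -/

import Mathlib

open MeasureTheory Filter Topology Set

noncomputable section

/-- Euclidean space `ℝ^n`; the torus `𝕋^n` is modelled by `ℤ^n`-periodic functions on it. -/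
abbrev En (n : ℕ) : Type := EuclideanSpace ℝ (Fin n)

/-- The integer vector `k ∈ ℤ^n` viewed as an element of `ℝ^n`. -/
def intVec (n : ℕ) (k : Fin n → ℤ) : En n := WithLp.toLp 2 (fun i => (k i : ℝ))

/-- A `ℤ^n`-periodic function on `ℝ^n`, i.e. a function on the torus `𝕋^n`. -/
def ZPeriodic {n : ℕ} (f : En n → ℝ) : Prop :=
  ∀ (x : En n) (k : Fin n → ℤ), f (x + intVec n k) = f x

/-- A Hamiltonian `H : 𝕋^n × ℝ^n → ℝ` (periodic in the first variable). -/
def ZPeriodicH {n : ℕ} (H : En n → En n → ℝ) : Prop :=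
  ∀ (x : En n) (k : Fin n → ℤ) (p : En n), H (x + intVec n k) p = H x p

/-- A function on `𝕋^n × ℝ` (space-time, periodic in space). -/
def ZPeriodicST {n : ℕ} (u : En n × ℝ → ℝ) : Prop :=
  ∀ (x : En n) (k : Fin n → ℤ) (t : ℝ), u (x + intVec n k, t) = u (x, t)

/-- (A1): coercivity, `lim_{r→∞} inf{H(x,p) : x ∈ 𝕋^n, |p| ≥ r} = ∞`. -/
def Coercive {n : ℕ} (H : En n → En n → ℝ) : Prop :=
  ∀ M : ℝ, ∃ r : ℝ, ∀ (x p : En n), r ≤ ‖p‖ → M ≤ H x p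

/-- Coercivity for an `x`-independent Hamiltonian. -/
def CoerciveP {n : ℕ} (H : En n → ℝ) : Prop :=
  ∀ M : ℝ, ∃ r : ℝ, ∀ p : En n, r ≤ ‖p‖ → M ≤ H p

/-- Lipschitz continuity (membership in `W^{1,∞}`). -/
def IsLip {n : ℕ} (f : En n → ℝ) : Prop := ∃ K : NNReal, LipschitzWith K f

/-- Viscosity subsolution inequality for one stationary equation
`H(x, Dw) + c (w - wo) ≤ ρ(x)` of a weakly coupled system. -/
def StatSubIneq {n : ℕ} (H : En n → En n → ℝ) (c : ℝ) (w wo : En n → ℝ) (ρ : En n → ℝ) : Prop :=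
  ∀ φ : En n → ℝ, ContDiff ℝ 1 φ →
    ∀ x₀ : En n, IsLocalMax (fun x => w x - φ x) x₀ →
      H x₀ (gradient φ x₀) + c * (w x₀ - wo x₀) ≤ ρ x₀

/-- Viscosity supersolution inequality for one stationary equation. -/
def StatSuperIneq {n : ℕ} (H : En n → En n → ℝ) (c : ℝ) (w wo : En n → ℝ) (ρ : En n → ℝ) : Prop :=
  ∀ φ : En n → ℝ, ContDiff ℝ 1 φ →
    ∀ x₀ : En n, IsLocalMin (fun x => w x - φ x) x₀ →
      ρ x₀ ≤ H x₀ (gradient φ x₀) + c * (w x₀ - wo x₀)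

/-- Viscosity subsolution of the stationary system
`Hᵢ(x, Dwᵢ) + cᵢ (wᵢ - wⱼ) = ρᵢ(x)`, `i = 1,2`. -/
def CellSub {n : ℕ} (H₁ H₂ : En n → En n → ℝ) (c₁ c₂ : ℝ) (w₁ w₂ : En n → ℝ)
    (ρ₁ ρ₂ : En n → ℝ) : Prop :=
  StatSubIneq H₁ c₁ w₁ w₂ ρ₁ ∧ StatSubIneq H₂ c₂ w₂ w₁ ρ₂

/-- Viscosity supersolution of the stationary system. -/
def CellSuper {n : ℕ} (H₁ H₂ : En n → En n → ℝ) (c₁ c₂ : ℝ) (w₁ w₂ : En n → ℝ)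
    (ρ₁ ρ₂ : En n → ℝ) : Prop :=
  StatSuperIneq H₁ c₁ w₁ w₂ ρ₁ ∧ StatSuperIneq H₂ c₂ w₂ w₁ ρ₂

/-- Viscosity solution (continuous, sub- and supersolution) of the stationary system. -/
def CellSolution {n : ℕ} (H₁ H₂ : En n → En n → ℝ) (c₁ c₂ : ℝ) (v₁ v₂ : En n → ℝ)
    (ρ₁ ρ₂ : En n → ℝ) : Prop :=
  Continuous v₁ ∧ Continuous v₂ ∧
    CellSub H₁ H₂ c₁ c₂ v₁ v₂ ρ₁ ρ₂ ∧ CellSuper H₁ H₂ c₁ c₂ v₁ v₂ ρ₁ ρ₂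

/-- Subsolution of the ergodic problem (E) with constant `c` (coupling constants 1). -/
def ErgSub {n : ℕ} (H₁ H₂ : En n → En n → ℝ) (v₁ v₂ : En n → ℝ) (c : ℝ) : Prop :=
  CellSub H₁ H₂ 1 1 v₁ v₂ (fun _ => c) (fun _ => c)

/-- Supersolution of the ergodic problem (E). -/
def ErgSuper {n : ℕ} (H₁ H₂ : En n → En n → ℝ) (v₁ v₂ : En n → ℝ) (c : ℝ) : Prop :=
  CellSuper H₁ H₂ 1 1 v₁ v₂ (fun _ => c) (fun _ => c)

/-- Viscosity solution of the ergodic problem (E):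
`H₁(x,Dv₁) + v₁ - v₂ = c`, `H₂(x,Dv₂) + v₂ - v₁ = c` on `𝕋^n`. -/
def ErgSolution {n : ℕ} (H₁ H₂ : En n → En n → ℝ) (v₁ v₂ : En n → ℝ) (c : ℝ) : Prop :=
  CellSolution H₁ H₂ 1 1 v₁ v₂ (fun _ => c) (fun _ => c)

/-- Viscosity subsolution inequality for one evolution equation
`∂ₜ u + H(x, Du) + u - uo ≤ 0` in `𝕋^n × (0,∞)`. -/
def EvolSubIneq {n : ℕ} (H : En n → En n → ℝ) (u uo : En n × ℝ → ℝ) : Prop :=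
  ∀ φ : En n × ℝ → ℝ, ContDiff ℝ 1 φ →
    ∀ (x₀ : En n) (t₀ : ℝ), 0 < t₀ →
      IsLocalMax (fun q => u q - φ q) (x₀, t₀) →
      fderiv ℝ φ (x₀, t₀) (0, 1) + H x₀ (gradient (fun y => φ (y, t₀)) x₀)
        + u (x₀, t₀) - uo (x₀, t₀) ≤ 0

/-- Viscosity supersolution inequality for one evolution equation. -/
def EvolSuperIneq {n : ℕ} (H : En n → En n → ℝ) (u uo : En n × ℝ → ℝ) : Prop :=
  ∀ φ : En n × ℝ → ℝ, ContDiff ℝ 1 φ →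
    ∀ (x₀ : En n) (t₀ : ℝ), 0 < t₀ →
      IsLocalMin (fun q => u q - φ q) (x₀, t₀) →
      0 ≤ fderiv ℝ φ (x₀, t₀) (0, 1) + H x₀ (gradient (fun y => φ (y, t₀)) x₀)
        + u (x₀, t₀) - uo (x₀, t₀)

/-- Viscosity subsolution of system (C) (with coupling constants `c₁ = c₂ = 1`). -/
def SysSub {n : ℕ} (H₁ H₂ : En n → En n → ℝ) (u₁ u₂ : En n × ℝ → ℝ) : Prop :=
  EvolSubIneq H₁ u₁ u₂ ∧ EvolSubIneq H₂ u₂ u₁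

/-- Viscosity supersolution of system (C). -/
def SysSuper {n : ℕ} (H₁ H₂ : En n → En n → ℝ) (u₁ u₂ : En n × ℝ → ℝ) : Prop :=
  EvolSuperIneq H₁ u₁ u₂ ∧ EvolSuperIneq H₂ u₂ u₁

/-- Viscosity solution of the Cauchy problem (C): continuous on `𝕋^n × [0,∞)`,
sub- and supersolution, attaining the initial data. -/
def SysSolution {n : ℕ} (H₁ H₂ : En n → En n → ℝ) (u₀₁ u₀₂ : En n → ℝ)
    (u₁ u₂ : En n × ℝ → ℝ) : Prop :=
  ContinuousOn u₁ {q : En n × ℝ | 0 ≤ q.2} ∧ ContinuousOn u₂ {q : En n × ℝ | 0 ≤ q.2} ∧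
    SysSub H₁ H₂ u₁ u₂ ∧ SysSuper H₁ H₂ u₁ u₂ ∧
    (∀ x, u₁ (x, 0) = u₀₁ x) ∧ (∀ x, u₂ (x, 0) = u₀₂ x)

/-- Viscosity subsolution of the single stationary equation `H(x,Dv) ≤ c` on `𝕋^n`. -/
def SingleSub {n : ℕ} (H : En n → En n → ℝ) (v : En n → ℝ) (c : ℝ) : Prop :=
  ∀ φ : En n → ℝ, ContDiff ℝ 1 φ →
    ∀ x₀ : En n, IsLocalMax (fun x => v x - φ x) x₀ → H x₀ (gradient φ x₀) ≤ c

/-- Viscosity supersolution of the single stationary equation `H(x,Dv) ≥ c` on `𝕋^n`. -/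
def SingleSuper {n : ℕ} (H : En n → En n → ℝ) (v : En n → ℝ) (c : ℝ) : Prop :=
  ∀ φ : En n → ℝ, ContDiff ℝ 1 φ →
    ∀ x₀ : En n, IsLocalMin (fun x => v x - φ x) x₀ → c ≤ H x₀ (gradient φ x₀)

/-- Viscosity solution of the single stationary equation `H(x,Dv) = c` on `𝕋^n`. -/
def SingleSolution {n : ℕ} (H : En n → En n → ℝ) (v : En n → ℝ) (c : ℝ) : Prop :=
  Continuous v ∧ SingleSub H v c ∧ SingleSuper H v c

/-- Uniform convergence `u(·,t) → v` on `𝕋^n` as `t → ∞`. -/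
def UnifTendsTo {n : ℕ} (u : En n × ℝ → ℝ) (v : En n → ℝ) : Prop :=
  ∀ ε : ℝ, 0 < ε → ∃ T : ℝ, ∀ t : ℝ, T ≤ t → ∀ x : En n, |u (x, t) - v x| ≤ ε

/-- (A8)⁺ at level `η` with constant `ψ`. -/
def A8plusAt {n : ℕ} (H : En n → En n → ℝ) (η ψ : ℝ) : Prop :=
  ∀ (x p q : En n), η ≤ H x (p + q) → H x q ≤ 0 →
    ∀ μ : ℝ, 0 < μ → μ ≤ 1 → H x (p + q) + ψ * (1 - μ) ≤ μ * H x (μ⁻¹ • p + q)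

/-- (A8)⁻ at level `η` with constant `ψ`. -/
def A8minusAt {n : ℕ} (H : En n → En n → ℝ) (η ψ : ℝ) : Prop :=
  ∀ (x p q : En n), H x (p + q) ≤ -η → 0 ≤ H x q →
    ∀ μ : ℝ, 1 ≤ μ → μ * H x (μ⁻¹ • p + q) ≤ H x (p + q) - ψ * (μ - 1) / μ

/-- (A8)⁺ with threshold `η₀`. -/
def A8plus {n : ℕ} (H : En n → En n → ℝ) (η₀ : ℝ) : Prop :=
  ∀ η : ℝ, 0 < η → η ≤ η₀ → ∃ ψ : ℝ, 0 < ψ ∧ A8plusAt H η ψ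

/-- (A8)⁻ with threshold `η₀`. -/
def A8minus {n : ℕ} (H : En n → En n → ℝ) (η₀ : ℝ) : Prop :=
  ∀ η : ℝ, 0 < η → η ≤ η₀ → ∃ ψ : ℝ, 0 < ψ ∧ A8minusAt H η ψ

/-- The function `F` of the Key Lemma: `F(r) = C r` for `r ≥ 0`, `F(r) = r / C` for `r < 0`. -/
def Fc (C r : ℝ) : ℝ := if 0 ≤ r then C * r else r / C

/-- `α_η⁺(s)` (resp. `β_η⁺(s)` with `u = u₂`):
`min_{x ∈ 𝕋^n, t ≥ s} (u(x,t) - v(x) + η (t-s)) / (u(x,s) - v(x))`. -/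
def alphaPlus {n : ℕ} (u : En n × ℝ → ℝ) (v : En n → ℝ) (η s : ℝ) : ℝ :=
  sInf {r : ℝ | ∃ (x : En n) (t : ℝ), s ≤ t ∧
    r = (u (x, t) - v x + η * (t - s)) / (u (x, s) - v x)}

/-- `α_η⁻(s)` (resp. `β_η⁻(s)` with `u = u₂`):
`max_{x ∈ 𝕋^n, t ≥ s} (u(x,t) - v(x) - η (t-s)) / (u(x,s) - v(x))`. -/
def alphaMinus {n : ℕ} (u : En n × ℝ → ℝ) (v : En n → ℝ) (η s : ℝ) : ℝ :=
  sSup {r : ℝ | ∃ (x : En n) (t : ℝ), s ≤ t ∧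
    r = (u (x, t) - v x - η * (t - s)) / (u (x, s) - v x)}

/-- (A9)⁺. -/
def A9plus {n : ℕ} (H : En n → En n → ℝ) : Prop :=
  ∃ K : Set (En n), IsClosed K ∧ (∀ x ∈ K, ∀ k : Fin n → ℤ, x + intVec n k ∈ K) ∧
    (∀ x ∈ K, (∀ p : En n, 0 ≤ H x p) ∧ ∃ p : En n, H x p = 0) ∧
    (∀ ε : ℝ, 0 < ε → ∃ η₀ : ℝ, 0 < η₀ ∧ ∃ ψ : ℝ → ℝ, (∀ r : ℝ, 0 < r → 0 < ψ r) ∧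
      ∀ η : ℝ, 0 < η → η ≤ η₀ → ∀ (x p q : En n), ε ≤ Metric.infDist x K →
        η ≤ H x (p + q) → H x q ≤ 0 →
        ∀ μ : ℝ, 0 < μ → μ ≤ 1 → H x (p + q) + ψ η * (1 - μ) ≤ μ * H x (μ⁻¹ • p + q))

/-- (A9)⁻. -/
def A9minus {n : ℕ} (H : En n → En n → ℝ) : Prop :=
  ∃ K : Set (En n), IsClosed K ∧ (∀ x ∈ K, ∀ k : Fin n → ℤ, x + intVec n k ∈ K) ∧
    (∀ x ∈ K, (∀ p : En n, 0 ≤ H x p) ∧ ∃ p : En n, H x p = 0) ∧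
    (∀ ε : ℝ, 0 < ε → ∃ η₀ : ℝ, 0 < η₀ ∧ ∃ ψ : ℝ → ℝ, (∀ r : ℝ, 0 < r → 0 < ψ r) ∧
      ∀ η : ℝ, 0 < η → η ≤ η₀ → ∀ (x p q : En n), ε ≤ Metric.infDist x K →
        H x (p + q) ≤ -η → 0 ≤ H x q →
        ∀ μ : ℝ, 1 ≤ μ → μ * H x (μ⁻¹ • p + q) ≤ H x (p + q) - ψ η * (μ - 1) / μ)

/-- (A6): uniform convexity of an `x`-independent Hamiltonian. -/
def UnifConvex {n : ℕ} (H : En n → ℝ) : Prop :=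
  ∃ α : ℝ, 0 < α ∧ ∀ᵐ q : En n ∂volume, DifferentiableAt ℝ H q ∧
    ∀ p : En n, H q + fderiv ℝ H q (p - q) + α * ‖p - q‖ ^ 2 ≤ H p

end

/-!
At a common zero of `f₁` and `f₂` the maximum of `u₁` and `u₂` does not increase, so it converges,
and the coupling, which pulls each component towards the other, makes both components converge to
that same limit. Coercivity turns this local control into global bounds and into Lipschitz bounds in
space at later times, so that the upper limits `Vᵢ = limsup uᵢ` and the lower limits
`Wᵢ = liminf uᵢ` are reached uniformly; they form a sub- and a supersolution of (E) with `c = 0`,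
and `Vᵢ = Wᵢ` on the common zero set. Off that set (A4) makes `(λV₁, λV₂)` with `λ < 1` a strict
subsolution, and doubling variables gives `Vᵢ ≤ Wᵢ` everywhere.
-/

section Gradient

variable {E : Type*} [NormedAddCommGroup E] [InnerProductSpace ℝ E]

lemma contDiff_norm_sub_sq (c : E) : ContDiff ℝ 1 fun y : E => ‖y - c‖ ^ 2 :=
  (contDiff_id.sub contDiff_const).norm_sq ℝ

variable [CompleteSpace E] {f g : E → ℝ} {x : E}

lemma gradient_fun_add (hf : DifferentiableAt ℝ f x) (hg : DifferentiableAt ℝ g x) :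
    gradient (fun y => f y + g y) x = gradient f x + gradient g x := by
  simp only [gradient, fderiv_fun_add hf hg, map_add]

lemma gradient_fun_const_mul (c : ℝ) (hf : DifferentiableAt ℝ f x) :
    gradient (fun y => c * f y) x = c • gradient f x := by
  simp only [gradient, fderiv_const_mul hf, map_smul]

lemma gradient_fun_neg : gradient (fun y => -f y) x = -gradient f x := by
  simp only [gradient, fderiv_fun_neg, map_neg]

lemma continuous_gradient (hf : ContDiff ℝ 1 f) : Continuous (gradient f) :=
  (InnerProductSpace.toDual ℝ E).symm.continuous.comp (hf.continuous_fderiv one_ne_zero)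

lemma hasGradientAt_norm_sub_sq (c x : E) :
    HasGradientAt (fun y : E => ‖y - c‖ ^ 2) ((2 : ℝ) • (x - c)) x := by
  refine ((hasFDerivAt_id (𝕜 := ℝ) x).sub_const c).norm_sq.congr_fderiv ?_
  ext v
  simp [two_mul]

lemma norm_gradient_le_of_isLocalMax {K : NNReal} (hf : LipschitzWith K f)
    (hg : DifferentiableAt ℝ g x) (hmax : IsLocalMax (fun y => f y - g y) x) :
    ‖gradient g x‖ ≤ K := by
  set p := gradient g x
  rcases (norm_nonneg p).eq_or_lt with hp | hp
  · rw [← hp]; exact K.2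
  let line : ℝ → E := fun s => x - s • p
  have hline : Continuous line := by fun_prop
  have hmin : IsLocalMinOn (fun s => g (line s) + K * (s * ‖p‖)) (Ici 0) 0 := by
    have h0 : line 0 = x := by simp [line]
    have hev := (hline.tendsto' 0 x h0).eventually hmax
    filter_upwards [nhdsWithin_le_nhds hev, self_mem_nhdsWithin] with s hs hs0
    have hdist : dist x (line s) = s * ‖p‖ := by
      simp [line, norm_smul, abs_of_nonneg (mem_Ici.1 hs0)]
    have hlip := hf.dist_le_mul x (line s)
    rw [hdist, Real.dist_eq] at hlip
    rw [h0, zero_mul, mul_zero, add_zero]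
    linarith [le_abs_self (f x - f (line s))]
  have hderiv : HasDerivAt (fun s => g (line s) + K * (s * ‖p‖)) (-‖p‖ ^ 2 + K * ‖p‖) 0 := by
    have hl : HasDerivAt line (-p) 0 := by
      simpa using ((hasDerivAt_id' (0 : ℝ)).smul_const p).const_sub x
    have hg' : HasFDerivAt g (fderiv ℝ g x) (line 0) := by simpa [line] using hg.hasFDerivAt
    have hcomp := hg'.comp_hasDerivAt 0 hl
    rw [map_neg, ← inner_gradient_left, real_inner_self_eq_norm_sq] at hcomp
    have hcone := ((hasDerivAt_id' (0 : ℝ)).mul_const ‖p‖).const_mul (K : ℝ)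
    rw [one_mul] at hcone
    exact hcomp.add hcone
  have hnonneg := hmin.hasFDerivWithinAt_nonneg hderiv.hasFDerivAt.hasFDerivWithinAt
    (y := (1 : ℝ)) (mem_posTangentConeAt_of_segment_subset (by
      simpa [segment_eq_Icc] using Icc_subset_Ici_self))
  simp only [ContinuousLinearMap.toSpanSingleton_apply, one_smul] at hnonneg
  nlinarith

end Gradient

section SmoothDist

variable {E : Type*} [NormedAddCommGroup E] {ρ : ℝ}

/-- A `C¹` regularization, at scale `ρ`, of the distance to `x`; the barrier of the cone
estimate. -/
noncomputable def smoothDist (ρ : ℝ) (x y : E) : ℝ := √(‖y - x‖ ^ 2 + ρ ^ 2)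

lemma norm_sub_le_smoothDist (ρ : ℝ) (x y : E) : ‖y - x‖ ≤ smoothDist ρ x y :=
  Real.le_sqrt_of_sq_le (le_add_of_nonneg_right (sq_nonneg ρ))

lemma smoothDist_le_add (hρ : 0 ≤ ρ) (x y : E) : smoothDist ρ x y ≤ ‖y - x‖ + ρ :=
  Real.sqrt_le_iff.2 ⟨by positivity, by nlinarith [norm_nonneg (y - x)]⟩

variable [InnerProductSpace ℝ E]

lemma contDiff_smoothDist (hρ : 0 < ρ) (x : E) : ContDiff ℝ 1 (smoothDist ρ x) :=
  ((contDiff_norm_sub_sq x).add contDiff_const).sqrt fun y => by positivity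

lemma half_le_norm_gradient_smoothDist [CompleteSpace E] (hρ : 0 < ρ) {x y : E}
    (hy : ρ ≤ ‖y - x‖) : 1 / 2 ≤ ‖gradient (smoothDist ρ x) y‖ := by
  have hpos : 0 < ‖y - x‖ ^ 2 + ρ ^ 2 := by positivity
  have hgrad : HasGradientAt (smoothDist ρ x) ((smoothDist ρ x y)⁻¹ • (y - x)) y := by
    rw [hasGradientAt_iff_hasFDerivAt]
    refine (((hasGradientAt_norm_sub_sq x y).hasFDerivAt.add_const (ρ ^ 2)).sqrt
      hpos.ne').congr_fderiv ?_
    rw [← map_smul, smul_smul, smoothDist]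
    congr 2
    field_simp
  have hsmooth : 0 < smoothDist ρ x y := Real.sqrt_pos.2 hpos
  rw [hgrad.gradient, norm_smul, norm_inv, Real.norm_of_nonneg hsmooth.le, inv_mul_eq_div,
    le_div_iff₀ hsmooth]
  linarith [smoothDist_le_add hρ.le x y]

end SmoothDist

section Penalization

variable {X : Type*} [TopologicalSpace X] {g pen : X → ℝ}

lemma exists_nat_sub_mul_lt {a b c : ℝ} (hb : 0 ≤ b) (hab : b = 0 → a < c) :
    ∃ k : ℕ, a - k * b < c := by
  rcases hb.eq_or_lt with hb | hb
  · exact ⟨0, by simpa using hab hb.symm⟩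
  · obtain ⟨k, hk⟩ := exists_nat_gt ((a - c) / b)
    exact ⟨k, by linarith [(div_lt_iff₀ hb).1 hk]⟩

lemma exists_nat_forall_mem_sub_mul_lt (hg : Continuous g) (hpen : Continuous pen)
    (hpen_nonneg : ∀ z, 0 ≤ pen z) {B : Set X} (hB : IsCompact B) {c : ℝ}
    (hlt : ∀ z ∈ B, pen z = 0 → g z < c) : ∃ k : ℕ, ∀ z ∈ B, g z - k * pen z < c := by
  have hopen (k : ℕ) : IsOpen {z | g z - k * pen z < c} := isOpen_lt (by fun_prop) (by fun_prop)
  have hmono : Monotone fun k : ℕ => {z | g z - k * pen z < c} := by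
    intro k l hkl z hz
    have hle : (k : ℝ) * pen z ≤ l * pen z := by gcongr; exact hpen_nonneg z
    exact (sub_le_sub_left hle _).trans_lt hz
  refine hB.elim_directed_cover _ hopen (fun z hz => ?_) hmono.directed_le
  exact mem_iUnion.2 (exists_nat_sub_mul_lt (hpen_nonneg z) (hlt z hz))

lemma frequently_isLocalMaxOn_sub_mul [LocallyCompactSpace X] (hg : Continuous g)
    (hpen : Continuous pen) (hpen_nonneg : ∀ z, 0 ≤ pen z) {S : Set X} (hS : IsClosed S)
    {z₀ : X} (hz₀ : z₀ ∈ S) (hpen_zero : pen z₀ = 0)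
    (hstrict : ∀ᶠ z in 𝓝[S] z₀, pen z = 0 → g z₀ ≤ g z → z = z₀) :
    ∃ᶠ z in 𝓝[S] z₀, ∃ k : ℕ, IsLocalMaxOn (fun y => g y - k * pen y) S z := by
  refine frequently_iff.2 fun {U} hU => ?_
  obtain ⟨V, hV, hVU⟩ := mem_nhdsWithin_iff_exists_mem_nhds_inter.1 (inter_mem hU hstrict)
  obtain ⟨K, hK, hKV, hKcompact⟩ := local_compact_nhds hV
  have hKS : IsCompact (K ∩ S) := hKcompact.inter_right hS
  obtain ⟨k, hk⟩ := exists_nat_forall_mem_sub_mul_lt hg hpen hpen_nonneg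
    (hKS.diff isOpen_interior) (c := g z₀) fun z hz hz_pen => by
      by_contra! hle
      have hzz₀ : z = z₀ := (hVU ⟨hKV hz.1.1, hz.1.2⟩).2 hz_pen hle
      exact hz.2 (hzz₀ ▸ mem_interior_iff_mem_nhds.2 hK)
  have hz₀K : z₀ ∈ K ∩ S := ⟨mem_of_mem_nhds hK, hz₀⟩
  obtain ⟨z, hz, hmax⟩ := hKS.exists_isMaxOn ⟨z₀, hz₀K⟩
    (f := fun y => g y - k * pen y) (by fun_prop)
  have hz_int : z ∈ interior K := by
    by_contra hz_not
    have hge : g z₀ ≤ g z - k * pen z := by simpa [hpen_zero] using hmax hz₀K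
    exact (hk z ⟨hz, hz_not⟩).not_ge hge
  refine ⟨z, (hVU ⟨hKV hz.1, hz.2⟩).1, k, ?_⟩
  filter_upwards [inter_mem_nhdsWithin S (mem_interior_iff_mem_nhds.1 hz_int)] with y hy
  exact hmax ⟨hy.2, hy.1⟩

end Penalization

section BackwardSub

variable {E : Type*} [NormedAddCommGroup E]

lemma eq_of_norm_sub_sq_add_sub_sq_nonpos {q q₀ : E × ℝ}
    (h : ‖q.1 - q₀.1‖ ^ 2 + (q.2 - q₀.2) ^ 2 ≤ 0) : q = q₀ := by
  have hx : ‖q.1 - q₀.1‖ ^ 2 = 0 := by nlinarith [sq_nonneg ‖q.1 - q₀.1‖, sq_nonneg (q.2 - q₀.2)]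
  have ht : (q.2 - q₀.2) ^ 2 = 0 := by nlinarith
  rw [sq_eq_zero_iff, norm_eq_zero, sub_eq_zero] at hx
  rw [sq_eq_zero_iff, sub_eq_zero] at ht
  exact Prod.ext hx ht

variable [InnerProductSpace ℝ E] [CompleteSpace E]

/-- `u` is a viscosity subsolution of `∂ₜu + G((x, t), Du) ≤ 0` for `t > 0`, tested only with
separable functions `α(x) + β(t)`. The coupling terms of a system are part of `G`. -/
def IsSepSub (G : E × ℝ → E → ℝ) (u : E × ℝ → ℝ) : Prop :=
  ∀ (α : E → ℝ) (β : ℝ → ℝ), ContDiff ℝ 1 α → ContDiff ℝ 1 β → ∀ q₀ : E × ℝ, 0 < q₀.2 →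
    IsLocalMax (fun q => u q - (α q.1 + β q.2)) q₀ → deriv β q₀.2 + G q₀ (gradient α q₀.1) ≤ 0

/-- As `IsSepSub`, but the test function touches `u` from above only at times `t ≤ t₀`: the
equation does not see the future. -/
def IsBackwardSub (G : E × ℝ → E → ℝ) (u : E × ℝ → ℝ) : Prop :=
  ∀ (α : E → ℝ) (β : ℝ → ℝ), ContDiff ℝ 1 α → ContDiff ℝ 1 β → ∀ q₀ : E × ℝ, 0 < q₀.2 →
    IsLocalMaxOn (fun q => u q - (α q.1 + β q.2)) {q | q.2 ≤ q₀.2} q₀ →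
    deriv β q₀.2 + G q₀ (gradient α q₀.1) ≤ 0

lemma EvolSubIneq.isSepSub {n : ℕ} {H : En n → En n → ℝ} {u uo : En n × ℝ → ℝ}
    (h : EvolSubIneq H u uo) : IsSepSub (fun q p => H q.1 p + u q - uo q) u := by
  rintro α β hα hβ ⟨x₀, t₀⟩ ht hmax
  have hα' := hα.differentiable one_ne_zero x₀
  have hβ' := hβ.differentiable one_ne_zero t₀
  have hspace : gradient (fun y => α y + β t₀) x₀ = gradient α x₀ := by
    rw [gradient_fun_add hα' (differentiableAt_const _), gradient_fun_const, add_zero]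
  have htime : fderiv ℝ (fun q : En n × ℝ => α q.1 + β q.2) (x₀, t₀) (0, 1) = deriv β t₀ := by
    have hfst := hα'.hasFDerivAt.comp (x₀, t₀) (hasFDerivAt_fst (𝕜 := ℝ))
    have hsnd := hβ'.hasFDerivAt.comp (x₀, t₀) (hasFDerivAt_snd (𝕜 := ℝ))
    have hsum : HasFDerivAt (fun q : En n × ℝ => α q.1 + β q.2) _ (x₀, t₀) := hfst.add hsnd
    simp [hsum.fderiv]
  have hφ : ContDiff ℝ 1 fun q : En n × ℝ => α q.1 + β q.2 :=
    (hα.comp contDiff_fst).add (hβ.comp contDiff_snd)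
  have := h _ hφ x₀ t₀ ht hmax
  rw [htime, hspace] at this
  linarith

lemma gradient_add_norm_sub_sq {α : E → ℝ} (hα : ContDiff ℝ 1 α) (c x : E) :
    gradient (fun y => α y + ‖y - c‖ ^ 2) x = gradient α x + (2 : ℝ) • (x - c) := by
  have hsq := hasGradientAt_norm_sub_sq c x
  rw [gradient_fun_add (hα.differentiable one_ne_zero x) hsq.differentiableAt, hsq.gradient]

lemma hasDerivAt_add_sub_sq {β : ℝ → ℝ} (hβ : ContDiff ℝ 1 β) (c s : ℝ) :
    HasDerivAt (fun s => β s + (s - c) ^ 2) (deriv β s + 2 * (s - c)) s := by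
  simpa using (hβ.differentiable one_ne_zero s).hasDerivAt.fun_add
    (((hasDerivAt_id' s).sub_const c).fun_pow 2)

lemma deriv_add_sub_sq_add_const_mul_expNegInvGlue_ge {β : ℝ → ℝ} (hβ : ContDiff ℝ 1 β)
    (c s : ℝ) (k : ℕ) :
    deriv β s + 2 * (s - c) ≤
      deriv (fun s => β s + (s - c) ^ 2 + k * expNegInvGlue (s - c)) s := by
  have hglue : ContDiff ℝ 1 fun s => (k : ℝ) * expNegInvGlue (s - c) :=
    contDiff_const.mul (expNegInvGlue.contDiff.comp (by fun_prop))
  have hmono : Monotone fun s => (k : ℝ) * expNegInvGlue (s - c) := fun a b hab =>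
    mul_le_mul_of_nonneg_left (expNegInvGlue.monotone (sub_le_sub_right hab c)) k.cast_nonneg
  rw [((hasDerivAt_add_sub_sq hβ c s).fun_add
    (hglue.differentiable one_ne_zero s).hasDerivAt).deriv]
  exact le_add_of_nonneg_right hmono.deriv_nonneg

variable {G G₁ G₂ : E × ℝ → E → ℝ} {u u₁ u₂ g : E × ℝ → ℝ}

lemma IsBackwardSub.sup (h₁ : IsBackwardSub G₁ u₁) (h₂ : IsBackwardSub G₂ u₂)
    (hG₁ : ∀ q p, u₂ q ≤ u₁ q → G q p ≤ G₁ q p) (hG₂ : ∀ q p, u₁ q ≤ u₂ q → G q p ≤ G₂ q p) :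
    IsBackwardSub G fun q => max (u₁ q) (u₂ q) := by
  intro α β hα hβ q₀ ht hmax
  rcases le_total (u₂ q₀) (u₁ q₀) with hle | hle
  · have htouch : IsLocalMaxOn (fun q => u₁ q - (α q.1 + β q.2)) {q | q.2 ≤ q₀.2} q₀ := by
      filter_upwards [hmax] with q hq
      rw [max_eq_left hle] at hq
      linarith [le_max_left (u₁ q) (u₂ q)]
    linarith [h₁ α β hα hβ q₀ ht htouch, hG₁ q₀ (gradient α q₀.1) hle]
  · have htouch : IsLocalMaxOn (fun q => u₂ q - (α q.1 + β q.2)) {q | q.2 ≤ q₀.2} q₀ := by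
      filter_upwards [hmax] with q hq
      rw [max_eq_right hle] at hq
      linarith [le_max_right (u₁ q) (u₂ q)]
    linarith [h₂ α β hα hβ q₀ ht htouch, hG₂ q₀ (gradient α q₀.1) hle]

variable [LocallyCompactSpace E]

-- Penalizing `t > t₀` by a multiple of `expNegInvGlue (t - t₀)` turns a backward test into a full
-- one, and costs only a nonnegative time derivative.
lemma IsSepSub.frequently_deriv_add_nonpos (h : IsSepSub G u) (hu : Continuous u)
    {α : E → ℝ} {β : ℝ → ℝ} (hα : ContDiff ℝ 1 α) (hβ : ContDiff ℝ 1 β) {x₀ : E} {t₀ : ℝ}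
    (ht : 0 < t₀)
    (hmax : IsLocalMaxOn (fun q => u q - (α q.1 + β q.2)) {q | q.2 ≤ t₀} (x₀, t₀)) :
    ∃ᶠ q in 𝓝 (x₀, t₀),
      deriv β q.2 + 2 * (q.2 - t₀) + G q (gradient α q.1 + (2 : ℝ) • (q.1 - x₀)) ≤ 0 := by
  have hα_cont := hα.continuous
  have hβ_cont := hβ.continuous
  have hglue : Continuous expNegInvGlue := (expNegInvGlue.contDiff (n := 0)).continuous
  have hpenal := frequently_isLocalMaxOn_sub_mul (S := univ) (z₀ := (x₀, t₀))
    (g := fun q => u q - (α q.1 + ‖q.1 - x₀‖ ^ 2 + (β q.2 + (q.2 - t₀) ^ 2)))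
    (pen := fun q => expNegInvGlue (q.2 - t₀)) (by fun_prop) (by fun_prop)
    (fun q => expNegInvGlue.nonneg _) isClosed_univ (mem_univ _) (by simp)
    (by
      rw [nhdsWithin_univ]
      filter_upwards [eventually_nhdsWithin_iff.1 hmax] with q hq hq_pen hge
      have hq_le : q.2 ≤ t₀ := by
        by_contra! hlt
        exact (expNegInvGlue.pos_of_pos (sub_pos.2 hlt)).ne' hq_pen
      have := hq hq_le
      simp only [sub_self, norm_zero] at hge
      exact eq_of_norm_sub_sq_add_sub_sq_nonpos (by linarith))
  rw [nhdsWithin_univ] at hpenal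
  have hpos : ∀ᶠ q : E × ℝ in 𝓝 (x₀, t₀), 0 < q.2 :=
    continuous_snd.continuousAt.eventually (lt_mem_nhds ht)
  refine (hpenal.and_eventually hpos).mono ?_
  rintro q ⟨⟨k, hk⟩, hq⟩
  rw [isLocalMaxOn_univ_iff] at hk
  have htouch := h _ (fun s => β s + (s - t₀) ^ 2 + k * expNegInvGlue (s - t₀))
    (hα.add (contDiff_norm_sub_sq x₀)) ((hβ.add (by fun_prop)).add
      (contDiff_const.mul (expNegInvGlue.contDiff.comp (by fun_prop)))) q hq
    (hk.congr (.of_forall fun y => by ring))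
  rw [gradient_add_norm_sub_sq hα] at htouch
  linarith [deriv_add_sub_sq_add_const_mul_expNegInvGlue_ge hβ t₀ q.2 k]

lemma IsSepSub.isBackwardSub (h : IsSepSub G u) (hu : Continuous u)
    (hG : Continuous fun z : (E × ℝ) × E => G z.1 z.2) : IsBackwardSub G u := by
  rintro α β hα hβ ⟨x₀, t₀⟩ ht hmax
  have hlim : Continuous fun q : E × ℝ =>
      deriv β q.2 + 2 * (q.2 - t₀) + G q (gradient α q.1 + (2 : ℝ) • (q.1 - x₀)) := by
    have hβ' := hβ.continuous_deriv le_rfl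
    have hα' := continuous_gradient hα
    exact ((hβ'.comp continuous_snd).add (by fun_prop)).add (hG.comp
      (f := fun q : E × ℝ => (q, gradient α q.1 + (2 : ℝ) • (q.1 - x₀))) (by fun_prop))
  simpa using le_of_tendsto_of_frequently (hlim.tendsto (x₀, t₀))
    (h.frequently_deriv_add_nonpos hu hα hβ ht hmax)

-- Penalizing `‖y - x‖ ^ 2` localizes the test at the fixed position `x`.
lemma IsBackwardSub.frequently_deriv_add_nonpos (h : IsBackwardSub G u) (hu : Continuous u)
    (hgG : ∀ q p, g q ≤ G q p) {x : E} {t₀ : ℝ} (ht : 0 < t₀) {β : ℝ → ℝ}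
    (hβ : ContDiff ℝ 1 β) (hmax : IsLocalMaxOn (fun s => u (x, s) - β s) (Iic t₀) t₀) :
    ∃ᶠ q in 𝓝 (x, t₀), deriv β q.2 + 2 * (q.2 - t₀) + g q ≤ 0 := by
  have hβ_cont := hβ.continuous
  have hpenal := frequently_isLocalMaxOn_sub_mul (S := {q : E × ℝ | q.2 ≤ t₀})
    (z₀ := (x, t₀)) (g := fun q => u q - (β q.2 + (q.2 - t₀) ^ 2))
    (pen := fun q => ‖q.1 - x‖ ^ 2) (by fun_prop) (by fun_prop)
    (fun q => sq_nonneg _) (isClosed_le continuous_snd continuous_const)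
    (mem_ofPred.2 le_rfl) (by simp)
    (by
      have htime : Tendsto Prod.snd (𝓝[{q : E × ℝ | q.2 ≤ t₀}] (x, t₀)) (𝓝[Iic t₀] t₀) :=
        continuous_snd.continuousWithinAt.tendsto_nhdsWithin fun q hq => hq
      filter_upwards [htime.eventually hmax] with q hq hq_pen hge
      rw [sq_eq_zero_iff, norm_eq_zero, sub_eq_zero] at hq_pen
      subst hq_pen
      simp only [sub_self] at hge
      refine eq_of_norm_sub_sq_add_sub_sq_nonpos ?_
      rw [sub_self, norm_zero]
      linarith)
  have hpos : ∀ᶠ q : E × ℝ in 𝓝 (x, t₀), 0 < q.2 :=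
    continuous_snd.continuousAt.eventually (lt_mem_nhds ht)
  refine ((hpenal.and_eventually (eventually_mem_nhdsWithin.and
    (nhdsWithin_le_nhds hpos))).filter_mono nhdsWithin_le_nhds).mono ?_
  rintro q ⟨⟨k, hk⟩, hqt, hq⟩
  have htouch : IsLocalMaxOn (fun y => u y - (k * ‖y.1 - x‖ ^ 2 + (β y.2 + (y.2 - t₀) ^ 2)))
      {y | y.2 ≤ q.2} q := by
    filter_upwards [hk.on_subset fun y hy => mem_ofPred.2 (le_trans hy hqt)] with y hy
    linarith
  have hineq := h (fun y => k * ‖y - x‖ ^ 2) (fun s => β s + (s - t₀) ^ 2)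
    (contDiff_const.mul (contDiff_norm_sub_sq x)) (hβ.add (by fun_prop)) q hq htouch
  rw [(hasDerivAt_add_sub_sq hβ t₀ q.2).deriv] at hineq
  linarith [hgG q (gradient (fun y => k * ‖y - x‖ ^ 2) q.1)]

lemma IsBackwardSub.deriv_add_nonpos (h : IsBackwardSub G u) (hu : Continuous u)
    (hg : Continuous g) (hgG : ∀ q p, g q ≤ G q p) {x : E} {t₀ : ℝ} (ht : 0 < t₀) {β : ℝ → ℝ}
    (hβ : ContDiff ℝ 1 β) (hmax : IsLocalMaxOn (fun s => u (x, s) - β s) (Iic t₀) t₀) :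
    deriv β t₀ + g (x, t₀) ≤ 0 := by
  have hlim : Continuous fun q : E × ℝ => deriv β q.2 + 2 * (q.2 - t₀) + g q := by fun_prop
  simpa using le_of_tendsto_of_frequently (hlim.tendsto (x, t₀))
    (h.frequently_deriv_add_nonpos hu hgG ht hβ hmax)

end BackwardSub

section Barriers

variable {E : Type*} [NormedAddCommGroup E] [InnerProductSpace ℝ E] [ProperSpace E]
  {G : E × ℝ → E → ℝ} {u g : E × ℝ → ℝ} {x y : E} {a b A R m D ρ C M : ℝ}

lemma IsBackwardSub.le_barrier (h : IsBackwardSub G u) (hu : Continuous u) (hg : Continuous g)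
    (hgG : ∀ q p, g q ≤ G q p) (ha : 0 ≤ a) (hab : a ≤ b) {β : ℝ → ℝ} (hβ : ContDiff ℝ 1 β)
    (hinit : u (x, a) ≤ β a)
    (hstrict : ∀ s ∈ Ioc a b, β s < u (x, s) → 0 < deriv β s + g (x, s)) :
    u (x, b) ≤ β b := by
  have hβ_cont := hβ.continuous
  obtain ⟨t₀, ht₀, hmax⟩ := isCompact_Icc.exists_isMaxOn (nonempty_Icc.2 hab)
    (f := fun s => u (x, s) - β s) (by fun_prop)
  by_contra! hlt
  have hgap : u (x, b) - β b ≤ u (x, t₀) - β t₀ := hmax (right_mem_Icc.2 hab)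
  have hat₀ : a < t₀ := ht₀.1.lt_of_ne (by rintro rfl; linarith)
  have htouch : IsLocalMaxOn (fun s => u (x, s) - β s) (Iic t₀) t₀ := by
    filter_upwards [self_mem_nhdsWithin, nhdsWithin_le_nhds (lt_mem_nhds hat₀)] with s hs has
    exact hmax ⟨has.le, le_trans hs ht₀.2⟩
  exact (h.deriv_add_nonpos hu hg hgG (ha.trans_lt hat₀) hβ htouch).not_gt
    (hstrict t₀ ⟨hat₀, ht₀.2⟩ (by linarith))

lemma IsBackwardSub.le_add_mul_sub (h : IsBackwardSub G u) (hu : Continuous u)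
    (hg : Continuous g) (hgG : ∀ q p, g q ≤ G q p) (ha : 0 ≤ a) (hab : a ≤ b)
    (hC : ∀ s ∈ Icc a b, -C ≤ g (x, s)) : u (x, b) ≤ u (x, a) + C * (b - a) := by
  have hbarrier : ∀ c ∈ Ioi C, u (x, b) ≤ u (x, a) + c * (b - a) := fun c hc => by
    have hderiv (s : ℝ) : HasDerivAt (fun s => u (x, a) + c * (s - a)) c s := by
      simpa using (((hasDerivAt_id' s).sub_const a).const_mul c).const_add (u (x, a))
    refine h.le_barrier (β := fun s => u (x, a) + c * (s - a)) hu hg hgG ha hab (by fun_prop)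
      (by simp) fun s hs _ => ?_
    rw [(hderiv s).deriv]
    linarith [hC s (Ioc_subset_Icc_self hs), mem_Ioi.1 hc]
  have hlim : Continuous fun c => u (x, a) + c * (b - a) := by fun_prop
  exact ge_of_tendsto (hlim.continuousWithinAt (s := Ioi C))
    (eventually_mem_nhdsWithin.mono hbarrier)

lemma IsBackwardSub.le_sub_mul_exp (h : IsBackwardSub G u) (hu : Continuous u)
    (hg : Continuous g) (hgG : ∀ q p, g q ≤ G q p) (ha : 0 ≤ a) (hab : a ≤ b)
    (hM : ∀ s ∈ Icc a b, u (x, s) - M ≤ g (x, s)) :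
    u (x, b) ≤ M - (M - u (x, a)) * Real.exp (-(b - a)) := by
  have hderiv (s : ℝ) : HasDerivAt (fun s => M - (M - u (x, a)) * Real.exp (-(s - a)))
      ((M - u (x, a)) * Real.exp (-(s - a))) s := by
    simpa using ((((hasDerivAt_id' s).sub_const a).fun_neg.exp).const_mul
      (M - u (x, a))).const_sub M
  refine h.le_barrier (β := fun s => M - (M - u (x, a)) * Real.exp (-(s - a))) hu hg hgG ha hab
    (by fun_prop) (by simp) fun s hs hlt => ?_
  rw [(hderiv s).deriv]
  linarith [hM s (Ioc_subset_Icc_self hs)]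

lemma exists_isMaxOn_sub_smoothDist (hu : Continuous u) (hab : a ≤ b) (hA : 0 ≤ A) (hR : 0 < R)
    (hρ : 0 < ρ) (hD : ∀ q, q.2 ∈ Icc a b → u q ≤ D) :
    ∃ q₀ : E × ℝ, q₀.2 ∈ Icc a b ∧
      IsMaxOn (fun q => u q - (2 * R * smoothDist ρ x q.1 + A * (b - q.2)))
        {q | q.2 ∈ Icc a b} q₀ := by
  have hdist := (contDiff_smoothDist hρ x).continuous
  set v : E × ℝ → ℝ := fun q => u q - (2 * R * smoothDist ρ x q.1 + A * (b - q.2))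
  have hclosed : IsClosed {q : E × ℝ | q.2 ∈ Icc a b} := isClosed_Icc.preimage continuous_snd
  have hv : Continuous v := by fun_prop
  refine hv.continuousOn.exists_isMaxOn' hclosed (x₀ := (x, b))
    (mem_ofPred.2 (right_mem_Icc.2 hab)) ?_
  have hK := (isCompact_closedBall x ((D - v (x, b)) / (2 * R))).prod
    (isCompact_Icc (a := a) (b := b))
  filter_upwards [mem_inf_of_left hK.compl_mem_cocompact,
    mem_inf_of_right (mem_principal_self _)] with q hqK (hqs : q.2 ∈ Icc a b)
  have hfar : (D - v (x, b)) / (2 * R) < ‖q.1 - x‖ := by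
    by_contra! hle
    exact hqK ⟨mem_closedBall_iff_norm.2 hle, hqs⟩
  rw [div_lt_iff₀' (by positivity)] at hfar
  have hcone : 2 * R * ‖q.1 - x‖ ≤ 2 * R * smoothDist ρ x q.1 := by
    gcongr
    exact norm_sub_le_smoothDist ρ x q.1
  linarith [hD q hqs, mul_nonneg hA (sub_nonneg.2 hqs.2)]

lemma IsBackwardSub.le_add_smoothDist (h : IsBackwardSub G u) (hu : Continuous u) (ha : 0 ≤ a)
    (hab : a ≤ b) (hA : 0 ≤ A) (hR : 0 < R) (hρ : 0 < ρ)
    (hD : ∀ q, q.2 ∈ Icc a b → u q ≤ D)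
    (hnear : ∀ y, ‖y - x‖ ≤ ρ → ∀ s ∈ Icc a b, u (y, s) ≤ m)
    (hinit : ∀ y, u (y, a) ≤ m + A * (b - a))
    (hG : ∀ q, q.2 ∈ Icc a b → ∀ p, R ≤ ‖p‖ → A < G q p) :
    u (y, b) ≤ m + 2 * R * smoothDist ρ x y := by
  obtain ⟨⟨y₀, t₀⟩, ht₀, hmax⟩ := exists_isMaxOn_sub_smoothDist (x := x) hu hab hA hR hρ hD
  have hcone : 0 ≤ 2 * R * smoothDist ρ x y₀ :=
    mul_nonneg (by positivity) ((norm_nonneg _).trans (norm_sub_le_smoothDist ρ x y₀))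
  have htime : 0 ≤ A * (b - t₀) := mul_nonneg hA (sub_nonneg.2 ht₀.2)
  suffices hle : u (y₀, t₀) - (2 * R * smoothDist ρ x y₀ + A * (b - t₀)) ≤ m by
    have hyb := hmax (mem_ofPred.2 (right_mem_Icc.2 hab) : (y, b) ∈ {q : E × ℝ | q.2 ∈ Icc a b})
    simp only [mem_ofPred, sub_self, mul_zero, add_zero] at hyb
    linarith
  rcases le_or_gt ‖y₀ - x‖ ρ with hy₀ | hy₀
  · linarith [hnear y₀ hy₀ t₀ ht₀]
  rcases ht₀.1.eq_or_lt with (rfl : a = t₀) | (hat₀ : a < t₀)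
  · linarith [hinit y₀]
  have htouch : IsLocalMaxOn (fun q => u q - (2 * R * smoothDist ρ x q.1 + A * (b - q.2)))
      {q | q.2 ≤ t₀} (y₀, t₀) := by
    have hafter : ∀ᶠ q : E × ℝ in 𝓝 (y₀, t₀), a < q.2 :=
      continuous_snd.continuousAt.eventually (lt_mem_nhds hat₀)
    filter_upwards [self_mem_nhdsWithin, nhdsWithin_le_nhds hafter] with q hq haq
    exact hmax (mem_ofPred.2 ⟨haq.le, le_trans hq ht₀.2⟩)
  have hdist := contDiff_smoothDist hρ x
  have hineq := h (fun z => 2 * R * smoothDist ρ x z) (fun s => A * (b - s))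
    (contDiff_const.mul hdist) (by fun_prop) _ (ha.trans_lt hat₀) htouch
  have hslope : deriv (fun s => A * (b - s)) t₀ = -A := by simp
  have hsteep : R ≤ ‖gradient (fun z => 2 * R * smoothDist ρ x z) y₀‖ := by
    rw [gradient_fun_const_mul _ (hdist.differentiable one_ne_zero y₀), norm_smul,
      Real.norm_of_nonneg (by positivity)]
    nlinarith [half_le_norm_gradient_smoothDist hρ hy₀.le]
  linarith [hG _ ht₀ _ hsteep]

lemma IsBackwardSub.le_add_mul_norm_sub (h : IsBackwardSub G u) (hu : Continuous u)
    (ha : 0 ≤ a) (hab : a ≤ b) (hA : 0 ≤ A) (hR : 0 < R)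
    (hD : ∀ q, q.2 ∈ Icc a b → u q ≤ D) (hx : ∀ s ∈ Icc a b, u (x, s) ≤ m)
    (hinit : ∀ y, u (y, a) ≤ m + A * (b - a))
    (hG : ∀ q, q.2 ∈ Icc a b → ∀ p, R ≤ ‖p‖ → A < G q p) (y : E) :
    u (y, b) ≤ m + 2 * R * ‖y - x‖ := by
  refine le_of_forall_pos_le_add fun ε hε => ?_
  have hnear : ∀ᶠ y in 𝓝 x, ∀ s ∈ Icc a b, u (y, s) < m + ε :=
    isCompact_Icc.eventually_forall_of_forall_eventually fun s hs =>
      hu.continuousAt.eventually (gt_mem_nhds ((hx s hs).trans_lt (by linarith)))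
  obtain ⟨r, hr, hball⟩ := Metric.nhds_basis_closedBall.eventually_iff.1 hnear
  have hsmooth : ∀ᶠ ρ in 𝓝[>] (0 : ℝ), u (y, b) ≤ m + ε + 2 * R * (‖y - x‖ + ρ) := by
    filter_upwards [Ioc_mem_nhdsGT hr] with ρ hρ
    have hle := h.le_add_smoothDist (y := y) hu ha hab hA hR hρ.1 hD
      (fun z hz s hs => (hball (mem_closedBall_iff_norm.2 (hz.trans hρ.2)) s hs).le)
      (fun z => by linarith [hinit z]) hG
    have hcone : 2 * R * smoothDist ρ x y ≤ 2 * R * (‖y - x‖ + ρ) := by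
      gcongr
      exact smoothDist_le_add hρ.1.le x y
    linarith
  have hlim : Continuous fun ρ => m + ε + 2 * R * (‖y - x‖ + ρ) := by fun_prop
  have := ge_of_tendsto (hlim.continuousWithinAt (s := Ioi 0)) hsmooth
  linarith

end Barriers

section Periodic

variable {n : ℕ} {u : En n × ℝ → ℝ} {a b M : ℝ}

lemma exists_isCompact_forall_add_intVec_mem (n : ℕ) :
    ∃ K : Set (En n), IsCompact K ∧ ∀ x, ∃ k : Fin n → ℤ, x + intVec n k ∈ K := by
  refine ⟨WithLp.toLp 2 '' univ.pi fun _ => Icc 0 1,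
    (isCompact_univ_pi fun _ => isCompact_Icc).image (PiLp.continuous_toLp 2 _), fun x => ?_⟩
  refine ⟨fun i => -⌊x i⌋, fun i => Int.fract (x i), fun i _ => ?_, ?_⟩
  · exact ⟨Int.fract_nonneg _, (Int.fract_lt_one _).le⟩
  · ext i
    simp [intVec, Int.fract, sub_eq_add_neg]

lemma ZPeriodicST.exists_isMaxOn (hper : ZPeriodicST u) (hu : Continuous u) (hab : a ≤ b) :
    ∃ q₀ : En n × ℝ, q₀.2 ∈ Icc a b ∧ IsMaxOn u {q | q.2 ∈ Icc a b} q₀ := by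
  obtain ⟨K, hK, hcell⟩ := exists_isCompact_forall_add_intVec_mem n
  obtain ⟨k₀, hk₀⟩ := hcell 0
  obtain ⟨q₀, hq₀, hmax⟩ := (hK.prod isCompact_Icc).exists_isMaxOn
    ⟨(_, a), hk₀, left_mem_Icc.2 hab⟩ hu.continuousOn
  refine ⟨q₀, hq₀.2, ?_⟩
  rintro ⟨y, s⟩ hs
  obtain ⟨k, hk⟩ := hcell y
  have hle : u (y + intVec n k, s) ≤ u q₀ := hmax ⟨hk, hs⟩
  rwa [hper] at hle

lemma ZPeriodic.exists_forall_le {f : En n → ℝ} (hper : ZPeriodic f) (hf : Continuous f) :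
    ∃ x₀, ∀ x, f x ≤ f x₀ := by
  obtain ⟨q₀, -, hmax⟩ := ZPeriodicST.exists_isMaxOn (u := fun q => f q.1)
    (fun x k _ => hper x k) (by fun_prop) le_rfl
  exact ⟨q₀.1, fun x => hmax (mem_ofPred.2 (left_mem_Icc.2 le_rfl) :
    (x, 0) ∈ {q : En n × ℝ | q.2 ∈ Icc 0 0})⟩

lemma eventually_forall_of_periodic {l : Filter ℝ} {P : En n → ℝ → Prop}
    (hper : ∀ x k t, P (x + intVec n k) t → P x t)
    (hP : ∀ x, ∀ᶠ z in 𝓝 x ×ˢ l, P z.1 z.2) : ∀ᶠ t in l, ∀ x, P x t := by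
  obtain ⟨K, hK, hcell⟩ := exists_isCompact_forall_add_intVec_mem n
  have hcompact : ∀ᶠ z in 𝓝ˢ K ×ˢ l, P z.1 z.2 := hK.mem_nhdsSet_prod_of_forall fun x _ => hP x
  obtain ⟨pK, hpK, pl, hpl, himp⟩ := eventually_prod_iff.1 hcompact
  filter_upwards [hpl] with t ht x
  obtain ⟨k, hk⟩ := hcell x
  exact hper x k t (himp (hpK.self_of_nhdsSet _ hk) ht)

lemma ZPeriodicST.neg (hper : ZPeriodicST u) : ZPeriodicST fun q => -u q :=
  fun x k t => congrArg Neg.neg (hper x k t)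

lemma ZPeriodicST.sup {v : En n × ℝ → ℝ} (hu : ZPeriodicST u) (hv : ZPeriodicST v) :
    ZPeriodicST fun q => max (u q) (v q) :=
  fun x k t => congrArg₂ Max.max (hu x k t) (hv x k t)

lemma IsBackwardSub.le_of_forall_initial_le {G : En n × ℝ → En n → ℝ} (h : IsBackwardSub G u)
    (hu : Continuous u) (hper : ZPeriodicST u) (hG : ∀ q, 0 ≤ G q 0) (hM : ∀ x, u (x, 0) ≤ M)
    (hb : 0 ≤ b) (x : En n) : u (x, b) ≤ M := by
  have hslope : ∀ κ ∈ Ioi 0, u (x, b) ≤ M + κ * b := fun κ hκ => by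
    have hper' : ZPeriodicST fun q => u q - κ * q.2 := fun y k t => by simp only [hper y k t]
    obtain ⟨⟨y₀, t₀⟩, ht₀, hmax⟩ := hper'.exists_isMaxOn (by fun_prop) hb
    have hle := hmax (mem_ofPred.2 (right_mem_Icc.2 hb) : (x, b) ∈ {q : En n × ℝ | q.2 ∈ Icc 0 b})
    rcases ht₀.1.eq_or_lt with (rfl : 0 = t₀) | (hpos : 0 < t₀)
    · simp only [mem_ofPred, mul_zero, sub_zero] at hle
      linarith [hM y₀]
    have htouch : IsLocalMaxOn (fun q => u q - (0 + κ * q.2)) {q | q.2 ≤ t₀} (y₀, t₀) := by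
      have hafter : ∀ᶠ q : En n × ℝ in 𝓝 (y₀, t₀), 0 < q.2 :=
        continuous_snd.continuousAt.eventually (lt_mem_nhds hpos)
      filter_upwards [self_mem_nhdsWithin, nhdsWithin_le_nhds hafter] with q hq hq0
      simpa only [zero_add, mem_ofPred] using hmax (mem_ofPred.2 ⟨hq0.le, le_trans hq ht₀.2⟩)
    have hineq := h (fun _ => 0) (fun s => κ * s) contDiff_const (by fun_prop) _ hpos htouch
    have hderiv : deriv (fun s => κ * s) t₀ = κ := by simp
    rw [gradient_fun_const, hderiv] at hineq
    linarith [hG (y₀, t₀), mem_Ioi.1 hκ]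
  have hlim : Continuous fun κ => M + κ * b := by fun_prop
  simpa using ge_of_tendsto (hlim.continuousWithinAt (s := Ioi 0) (x := 0))
    (eventually_mem_nhdsWithin.mono hslope)

end Periodic

section UpperLimit

variable {E : Type*} {u : E × ℝ → ℝ} {x : E} {B c ε : ℝ}

/-- The pointwise upper limit of `u(x, ·)` as `t → ∞`. It is meaningful for bounded `u` only, since
`limsup` is real-valued here; the lower limit of `u` is `-upperLimit (-u)`. -/
noncomputable def upperLimit (u : E × ℝ → ℝ) (x : E) : ℝ := limsup (fun t => u (x, t)) atTop

lemma isBoundedUnder_le_of_forall_abs_le (hB : ∀ q, |u q| ≤ B) :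
    IsBoundedUnder (· ≤ ·) atTop fun t => u (x, t) :=
  isBoundedUnder_of ⟨B, fun t => (abs_le.1 (hB (x, t))).2⟩

lemma isCoboundedUnder_le_of_forall_abs_le (hB : ∀ q, |u q| ≤ B) :
    IsCoboundedUnder (· ≤ ·) atTop fun t => u (x, t) :=
  (isBoundedUnder_of (r := (· ≥ ·))
    ⟨-B, fun t => (abs_le.1 (hB (x, t))).1⟩ : IsBoundedUnder _ _ _).isCoboundedUnder_le

lemma eventually_lt_upperLimit_add (hB : ∀ q, |u q| ≤ B) (hε : 0 < ε) (x : E) :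
    ∀ᶠ t in atTop, u (x, t) < upperLimit u x + ε :=
  eventually_lt_of_limsup_lt (lt_add_of_pos_right _ hε) (isBoundedUnder_le_of_forall_abs_le hB)

lemma frequently_upperLimit_sub_lt (hB : ∀ q, |u q| ≤ B) (hε : 0 < ε) (x : E) :
    ∃ᶠ t in atTop, upperLimit u x - ε < u (x, t) :=
  frequently_lt_of_lt_limsup (isCoboundedUnder_le_of_forall_abs_le hB) (sub_lt_self _ hε)

lemma upperLimit_le (hB : ∀ q, |u q| ≤ B) (hle : ∀ᶠ t in atTop, u (x, t) ≤ c) :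
    upperLimit u x ≤ c :=
  limsup_le_of_le (isCoboundedUnder_le_of_forall_abs_le hB) hle

lemma neg_upperLimit_neg_le_upperLimit (hB : ∀ q, |u q| ≤ B) (x : E) :
    -upperLimit (fun q => -u q) x ≤ upperLimit u x := by
  refine le_of_forall_pos_le_add fun ε hε => ?_
  have hneg : ∀ᶠ t in atTop, -u (x, t) < upperLimit (fun q => -u q) x + ε / 2 :=
    eventually_lt_upperLimit_add (u := fun q => -u q) (by simpa only [abs_neg] using hB)
      (half_pos hε) x
  obtain ⟨t, ht, ht'⟩ := ((eventually_lt_upperLimit_add hB (half_pos hε) x).and hneg).exists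
  linarith

lemma ZPeriodicST.upperLimit {n : ℕ} {u : En n × ℝ → ℝ} (hper : ZPeriodicST u) :
    ZPeriodic (upperLimit u) := fun x k => by
  simp only [_root_.upperLimit, hper x k]

variable [PseudoMetricSpace E]

/-- For large times `u` lies below its upper limit up to `ε`, on a ball whose radius depends on `ε`
but not on the center. -/
def IsAsympBelowUpperLimit (u : E × ℝ → ℝ) : Prop :=
  ∀ ε > 0, ∃ δ > 0, ∀ x, ∀ᶠ t in atTop, ∀ y, dist y x < δ → u (y, t) ≤ upperLimit u x + ε

lemma IsAsympBelowUpperLimit.continuous (h : IsAsympBelowUpperLimit u) (hB : ∀ q, |u q| ≤ B) :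
    Continuous (upperLimit u) := by
  refine Metric.continuous_iff.2 fun x ε hε => ?_
  obtain ⟨δ, hδ, hbelow⟩ := h (ε / 2) (half_pos hε)
  have hle {y z : E} (hyz : dist y z < δ) : upperLimit u y ≤ upperLimit u z + ε / 2 :=
    upperLimit_le hB ((hbelow z).mono fun t ht => ht y hyz)
  refine ⟨δ, hδ, fun y hy => abs_lt.2 ⟨?_, ?_⟩⟩
  · linarith [hle (dist_comm x y ▸ hy)]
  · linarith [hle hy]

lemma IsAsympBelowUpperLimit.eventually_forall_le {n : ℕ} {u : En n × ℝ → ℝ}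
    (h : IsAsympBelowUpperLimit u) (hB : ∀ q, |u q| ≤ B) (hper : ZPeriodicST u) (hε : 0 < ε) :
    ∀ᶠ t in atTop, ∀ x, u (x, t) ≤ upperLimit u x + ε := by
  refine eventually_forall_of_periodic (fun x k t => ?_) fun x => ?_
  · rw [hper x k t, hper.upperLimit x k]
    exact id
  obtain ⟨δ, hδ, hbelow⟩ := h (ε / 2) (half_pos hε)
  have hcont : ∀ᶠ y in 𝓝 x, upperLimit u x - ε / 2 < upperLimit u y :=
    (h.continuous hB).continuousAt.eventually (lt_mem_nhds (by linarith))
  filter_upwards [(hcont.and (Metric.ball_mem_nhds x hδ)).prod_mk (hbelow x)] with z hz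
  linarith [hz.2 z.1 hz.1.2]

end UpperLimit

section Stability

lemma exists_isLocalMax_sub_sq {E : Type*} [NormedAddCommGroup E] [ProperSpace E]
    {v : E × ℝ → ℝ} (hv : Continuous v) {q₀ : E × ℝ} {r η : ℝ} (hr : 0 < r) (hη : η < r ^ 2)
    (hle : ∀ q ∈ Metric.closedBall q₀ r, v q ≤ v q₀ + η) :
    ∃ q ∈ Metric.ball q₀ r, v q₀ ≤ v q ∧
      IsLocalMax (fun q => v q - (‖q.1 - q₀.1‖ ^ 2 + (q.2 - q₀.2) ^ 2)) q := by
  obtain ⟨q, hq, hmax⟩ := (isCompact_closedBall q₀ r).exists_isMaxOn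
    ⟨q₀, Metric.mem_closedBall_self hr.le⟩
    (f := fun q => v q - (‖q.1 - q₀.1‖ ^ 2 + (q.2 - q₀.2) ^ 2)) (by fun_prop)
  have hge : v q₀ ≤ v q - (‖q.1 - q₀.1‖ ^ 2 + (q.2 - q₀.2) ^ 2) := by
    simpa using hmax (Metric.mem_closedBall_self hr.le)
  have hball : q ∈ Metric.ball q₀ r := by
    have hspace : ‖q.1 - q₀.1‖ < r :=
      lt_of_pow_lt_pow_left₀ 2 hr.le (by linarith [hle q hq, sq_nonneg (q.2 - q₀.2)])
    have htime : |q.2 - q₀.2| < r :=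
      abs_lt_of_sq_lt_sq (by linarith [hle q hq, sq_nonneg ‖q.1 - q₀.1‖]) hr.le
    rw [Metric.mem_ball, Prod.dist_eq, dist_eq_norm, Real.dist_eq]
    exact max_lt hspace htime
  refine ⟨q, hball, by linarith [sq_nonneg ‖q.1 - q₀.1‖, sq_nonneg (q.2 - q₀.2)], ?_⟩
  filter_upwards [Metric.isOpen_ball.mem_nhds hball] with y hy
  exact hmax (Metric.ball_subset_closedBall hy)

variable {n : ℕ} {H : En n → En n → ℝ} {u uo : En n × ℝ → ℝ} {V Vo φ : En n → ℝ} {x₀ : En n}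

lemma IsSepSub.frequently_stationary_le (h : IsSepSub (fun q p => H q.1 p + u q - uo q) u)
    (hu : Continuous u) (hV : ∀ ε > 0, ∀ᶠ t in atTop, ∀ x, u (x, t) ≤ V x + ε)
    (hVo : ∀ ε > 0, ∀ᶠ t in atTop, ∀ x, uo (x, t) ≤ Vo x + ε)
    (hfreq : ∀ ε > 0, ∃ᶠ t in atTop, V x₀ - ε < u (x₀, t))
    (hφ : ContDiff ℝ 1 φ) (hmax : IsLocalMax (fun x => V x - φ x) x₀) :
    ∃ᶠ z : En n × ℝ × ℝ in 𝓝 (x₀, 0, 0),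
      2 * z.2.1 + H z.1 (gradient φ z.1 + (2 : ℝ) • (z.1 - x₀)) + (V x₀ - φ x₀ + φ z.1)
        - Vo z.1 - 2 * z.2.2 ≤ 0 := by
  refine Metric.nhds_basis_ball.frequently_iff.2 fun ρ hρ => ?_
  obtain ⟨r₀, hr₀, hball⟩ := Metric.nhds_basis_closedBall.eventually_iff.1 hmax
  obtain ⟨r, hr, hrmin⟩ := exists_between (lt_min (lt_min hr₀ hρ) one_pos)
  obtain ⟨⟨hrr₀, hrρ⟩, hr1⟩ := And.imp_left lt_min_iff.1 (lt_min_iff.1 hrmin)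
  have hη : 0 < r ^ 2 / 4 := by positivity
  have hlate : ∀ᶠ τ in atTop, ∀ s, τ - r ≤ s →
      ((∀ x, u (x, s) ≤ V x + r ^ 2 / 4) ∧ ∀ x, uo (x, s) ≤ Vo x + r ^ 2 / 4) ∧ 0 < s :=
    (tendsto_atTop_add_const_right atTop (-r) tendsto_id).eventually (eventually_forall_ge_atTop.2
      (((hV _ hη).and (hVo _ hη)).and (eventually_gt_atTop 0)))
  obtain ⟨τ, hτ, hs⟩ := ((hfreq _ hη).and_eventually hlate).exists
  have hφ_cont := hφ.continuous
  have hwindow {q : En n × ℝ} (hq : q ∈ Metric.closedBall (x₀, τ) r) :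
      dist q.1 x₀ ≤ r ∧ |q.2 - τ| ≤ r := by
    rwa [Metric.mem_closedBall, Prod.dist_eq, max_le_iff, Real.dist_eq] at hq
  obtain ⟨q, hq, hge, hlocal⟩ := exists_isLocalMax_sub_sq (v := fun q => u q - φ q.1)
    (q₀ := (x₀, τ)) (η := r ^ 2 / 2) (by fun_prop) hr (by nlinarith) fun q hq => by
      have hnear := hball (Metric.mem_closedBall.2 ((hwindow hq).1.trans hrr₀.le))
      have hbelow := (hs q.2 (by linarith [(abs_le.1 (hwindow hq).2).1])).1.1 q.1
      linarith
  obtain ⟨⟨-, hupo⟩, hpos⟩ := hs q.2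
    (by linarith [(abs_le.1 (hwindow (Metric.ball_subset_closedBall hq)).2).1])
  have hineq := h (fun y => φ y + ‖y - x₀‖ ^ 2) (fun s => 0 + (s - τ) ^ 2)
    (hφ.add (contDiff_norm_sub_sq x₀)) (by fun_prop) q hpos
    (hlocal.congr (.of_forall fun y => by ring))
  rw [gradient_add_norm_sub_sq hφ, (hasDerivAt_add_sub_sq contDiff_const τ q.2).deriv,
    deriv_const] at hineq
  refine ⟨(q.1, q.2 - τ, r ^ 2 / 4), ?_, by linarith [hupo q.1]⟩
  rw [Metric.mem_ball, Prod.dist_eq, max_lt_iff, Real.dist_eq] at hq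
  simp only [Metric.mem_ball, Prod.dist_eq, Real.dist_eq, sub_zero, max_lt_iff]
  refine ⟨hq.1.trans hrρ, hq.2.trans hrρ, ?_⟩
  rw [abs_of_pos hη]
  nlinarith

lemma IsSepSub.statSubIneq (h : IsSepSub (fun q p => H q.1 p + u q - uo q) u)
    (hu : Continuous u) (hH : Continuous fun q : En n × En n => H q.1 q.2)
    (hVo_cont : Continuous Vo) (hV : ∀ ε > 0, ∀ᶠ t in atTop, ∀ x, u (x, t) ≤ V x + ε)
    (hVo : ∀ ε > 0, ∀ᶠ t in atTop, ∀ x, uo (x, t) ≤ Vo x + ε)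
    (hfreq : ∀ x, ∀ ε > 0, ∃ᶠ t in atTop, V x - ε < u (x, t)) :
    StatSubIneq H 1 V Vo fun _ => 0 := by
  intro φ hφ x₀ hmax
  have hφ_cont := hφ.continuous
  have hgrad := continuous_gradient hφ
  have hlim : Continuous fun z : En n × ℝ × ℝ =>
      2 * z.2.1 + H z.1 (gradient φ z.1 + (2 : ℝ) • (z.1 - x₀)) + (V x₀ - φ x₀ + φ z.1)
        - Vo z.1 - 2 * z.2.2 := by fun_prop
  have hle := le_of_tendsto_of_frequently (hlim.tendsto (x₀, 0, 0))
    (h.frequently_stationary_le hu hV hVo (hfreq x₀) hφ hmax)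
  simp only [mul_zero, sub_self, smul_zero, add_zero] at hle
  linarith

end Stability

section Equicontinuity

variable {E : Type*} [NormedAddCommGroup E] [InnerProductSpace ℝ E] [ProperSpace E]
  {G : E × ℝ → E → ℝ} {u : E × ℝ → ℝ} {B C τ : ℝ}

lemma IsBackwardSub.exists_forall_le_add_mul_norm_sub (h : IsBackwardSub G u) (hu : Continuous u)
    (hB : ∀ q, |u q| ≤ B) (hcoer : ∀ M, ∃ r, ∀ q p, r ≤ ‖p‖ → M ≤ G q p) (hτ : 0 < τ) :
    ∃ R > 0, ∀ x y m t, 0 ≤ t → (∀ s ∈ Icc t (t + τ), u (x, s) ≤ m) →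
      u (y, t + τ) ≤ m + R * ‖y - x‖ := by
  obtain ⟨r, hr⟩ := hcoer (2 * B / τ + 1)
  refine ⟨2 * max r 1, by positivity, fun x y m t ht hm => ?_⟩
  have hB_nonneg : 0 ≤ B := (abs_nonneg _).trans (hB (x, t))
  refine h.le_add_mul_norm_sub (A := 2 * B / τ) (D := B) hu ht (by linarith) (by positivity)
    (by positivity) (fun q _ => (abs_le.1 (hB q)).2) hm (fun z => ?_) (fun q _ p hp => ?_) y
  · have hmt := hm t (left_mem_Icc.2 (by linarith))
    rw [add_sub_cancel_left, div_mul_cancel₀ _ hτ.ne']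
    linarith [(abs_le.1 (hB (z, t))).2, (abs_le.1 (hB (x, t))).1]
  · linarith [hr q p ((le_max_left r 1).trans hp)]

lemma IsBackwardSub.exists_forall_le_add_mul_add_mul_norm_sub (h : IsBackwardSub G u)
    (hu : Continuous u) (hB : ∀ q, |u q| ≤ B) (hcoer : ∀ M, ∃ r, ∀ q p, r ≤ ‖p‖ → M ≤ G q p)
    (hC : 0 ≤ C) (hlow : ∀ q p, -C ≤ G q p) (hτ : 0 < τ) :
    ∃ R > 0, ∀ x y t, 0 ≤ t → u (y, t + τ) ≤ u (x, t) + C * τ + R * ‖y - x‖ := by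
  obtain ⟨R, hR, hcone⟩ := h.exists_forall_le_add_mul_norm_sub hu hB hcoer hτ
  refine ⟨R, hR, fun x y t ht => hcone x y _ t ht fun s hs => ?_⟩
  have hgrow := h.le_add_mul_sub (g := fun _ => -C) (x := x) hu continuous_const hlow ht hs.1
    fun _ _ => le_rfl
  have hmono : C * (s - t) ≤ C * τ := mul_le_mul_of_nonneg_left (by linarith [hs.2]) hC
  linarith

lemma IsBackwardSub.exists_eventually_le_upperLimit_add (h : IsBackwardSub G u)
    (hu : Continuous u) (hB : ∀ q, |u q| ≤ B) (hcoer : ∀ M, ∃ r, ∀ q p, r ≤ ‖p‖ → M ≤ G q p) :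
    ∃ R > 0, ∀ x, ∀ ε > 0, ∀ᶠ t in atTop, ∀ y,
      u (y, t) ≤ upperLimit u x + ε + R * ‖y - x‖ := by
  obtain ⟨R, hR, hcone⟩ := h.exists_forall_le_add_mul_norm_sub hu hB hcoer one_pos
  refine ⟨R, hR, fun x ε hε => ?_⟩
  have hlate := eventually_forall_ge_atTop.2 (eventually_lt_upperLimit_add hB hε x)
  filter_upwards [(tendsto_atTop_add_const_right atTop (-1) tendsto_id).eventually
    (hlate.and (eventually_ge_atTop 0))] with t ht y
  simpa only [id, neg_add_cancel_right] using
    hcone x y _ (t + -1) ht.2 fun s hs => (ht.1 s hs.1).le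

lemma IsBackwardSub.exists_lipschitzWith_upperLimit (h : IsBackwardSub G u) (hu : Continuous u)
    (hB : ∀ q, |u q| ≤ B) (hcoer : ∀ M, ∃ r, ∀ q p, r ≤ ‖p‖ → M ≤ G q p) :
    ∃ K, LipschitzWith K (upperLimit u) := by
  obtain ⟨R, hR, hcone⟩ := h.exists_eventually_le_upperLimit_add hu hB hcoer
  refine ⟨R.toNNReal, LipschitzWith.of_le_add_mul _ fun y x => ?_⟩
  refine le_of_forall_pos_le_add fun ε hε => upperLimit_le hB ((hcone x ε hε).mono fun t ht => ?_)
  rw [Real.coe_toNNReal R hR.le, dist_eq_norm]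
  linarith [ht y]

lemma IsBackwardSub.isAsympBelowUpperLimit (h : IsBackwardSub G u) (hu : Continuous u)
    (hB : ∀ q, |u q| ≤ B) (hcoer : ∀ M, ∃ r, ∀ q p, r ≤ ‖p‖ → M ≤ G q p) :
    IsAsympBelowUpperLimit u := by
  obtain ⟨R, hR, hcone⟩ := h.exists_eventually_le_upperLimit_add hu hB hcoer
  refine fun ε hε => ⟨ε / 2 / R, by positivity, fun x => ?_⟩
  filter_upwards [hcone x (ε / 2) (half_pos hε)] with t ht y hy
  have hsmall : R * ‖y - x‖ < ε / 2 := by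
    rwa [dist_eq_norm, lt_div_iff₀' hR] at hy
  linarith [ht y]

-- The cone estimate controls `u` at the later time, so after a change of sign it is read with the
-- two times exchanged, at the cost of the growth `C * τ` of `u` over `[t, t + τ]`.
lemma IsBackwardSub.isAsympBelowUpperLimit_neg (h : IsBackwardSub G u) (hu : Continuous u)
    (hB : ∀ q, |u q| ≤ B) (hcoer : ∀ M, ∃ r, ∀ q p, r ≤ ‖p‖ → M ≤ G q p)
    (hC : 0 < C) (hlow : ∀ q p, -C ≤ G q p) :
    IsAsympBelowUpperLimit fun q => -u q := by
  intro ε hε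
  obtain ⟨R, hR, hcone⟩ := h.exists_forall_le_add_mul_add_mul_norm_sub hu hB hcoer hC.le hlow
    (show 0 < ε / 4 / C by positivity)
  refine ⟨ε / 4 / R, by positivity, fun x => ?_⟩
  have hlate := eventually_lt_upperLimit_add (u := fun q => -u q) (by simpa only [abs_neg] using hB)
    (half_pos hε) x
  filter_upwards [(tendsto_atTop_add_const_right atTop (ε / 4 / C) tendsto_id).eventually hlate,
    eventually_ge_atTop 0] with t ht ht₀ y hy
  have hsmall : R * ‖x - y‖ < ε / 4 := by
    rwa [dist_comm, dist_eq_norm, lt_div_iff₀' hR] at hy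
  have hgrow := hcone y x t ht₀
  rw [mul_div_cancel₀ _ hC.ne'] at hgrow
  rw [id] at ht
  linarith

end Equicontinuity

section Reflection

variable {n : ℕ} {H : En n → En n → ℝ}

lemma EvolSuperIneq.neg {u uo : En n × ℝ → ℝ} (h : EvolSuperIneq H u uo) :
    EvolSubIneq (fun x p => -H x (-p)) (fun q => -u q) fun q => -uo q := by
  intro φ hφ x₀ t₀ ht hmax
  have hineq := h (fun q => -φ q) hφ.neg x₀ t₀ ht
    (hmax.neg.congr (.of_forall fun q => by ring))
  rw [gradient_fun_neg, fderiv_fun_neg, neg_apply] at hineq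
  linarith

lemma StatSuperIneq.of_neg {V Vo : En n → ℝ}
    (h : StatSubIneq (fun x p => -H x (-p)) 1 (fun x => -V x) (fun x => -Vo x) fun _ => 0) :
    StatSuperIneq H 1 V Vo fun _ => 0 := by
  intro φ hφ x₀ hmin
  have hineq := h (fun x => -φ x) hφ.neg x₀
    (hmin.neg.congr (.of_forall fun x => by ring))
  simp only [gradient_fun_neg, neg_neg] at hineq
  linarith

end Reflection

section Relaxation

variable {a b : ℝ → ℝ} {m δ : ℝ}

/-- `a' ≤ b - a` on `[0, ∞)` in integrated form: while `b` stays below a level `M`, the function `a`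
relaxes towards `M` at unit exponential rate. -/
def RelaxesTowards (a b : ℝ → ℝ) : Prop :=
  ∀ M t s, 0 ≤ t → t ≤ s → (∀ r ∈ Icc t s, b r ≤ M) → a s ≤ M - (M - a t) * Real.exp (-(s - t))

-- A deficit `δ` of `a` at time `t` survives, up to the factor `e⁻¹`, throughout `[t, t + 1]`, and
-- pulls `b` below its bound `M` by `e⁻¹ (1 - e⁻¹) δ` at time `t + 1`.
lemma RelaxesTowards.max_le_of_deficit (hab : RelaxesTowards a b) (hba : RelaxesTowards b a)
    {M t : ℝ} (ht : 0 ≤ t) (hb : ∀ s ∈ Icc t (t + 1), b s ≤ M) (hδ : 0 ≤ δ) (ha : a t ≤ M - δ) :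
    max (a (t + 1)) (b (t + 1)) ≤ M - Real.exp (-1) * (1 - Real.exp (-1)) * δ := by
  set e := Real.exp (-1) with he
  have he_pos : 0 < e := Real.exp_pos _
  have he_lt : e < 1 := Real.exp_lt_one_iff.2 neg_one_lt_zero
  have ha' : ∀ s ∈ Icc t (t + 1), a s ≤ M - δ * e := fun s hs => by
    have hrelax := hab M t s ht hs.1 fun r hr => hb r ⟨hr.1, hr.2.trans hs.2⟩
    have hexp : e ≤ Real.exp (-(s - t)) := Real.exp_le_exp.2 (by linarith [hs.2])
    have hdeficit : δ * e ≤ (M - a t) * Real.exp (-(s - t)) :=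
      mul_le_mul (by linarith) hexp he_pos.le (by linarith)
    linarith
  have hδe : 0 ≤ δ * e := by positivity
  refine max_le ?_ ?_
  · nlinarith [ha' (t + 1) (right_mem_Icc.2 (by linarith))]
  · have hrelax := hba (M - δ * e) t (t + 1) ht (by linarith) ha'
    have hdeficit : -(δ * e) * e ≤ (M - δ * e - b t) * e := by
      gcongr
      linarith [hb t (left_mem_Icc.2 (by linarith))]
    rw [add_sub_cancel_left, ← he] at hrelax
    linarith

lemma RelaxesTowards.tendsto_of_tendsto_max (hab : RelaxesTowards a b) (hba : RelaxesTowards b a)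
    (hmax : Tendsto (fun t => max (a t) (b t)) atTop (𝓝 m)) : Tendsto a atTop (𝓝 m) := by
  refine tendsto_order.2 ⟨fun l hl => ?_, fun l hl =>
    (hmax.eventually_lt_const hl).mono fun t ht => (le_max_left _ _).trans_lt ht⟩
  set c := Real.exp (-1) * (1 - Real.exp (-1)) with hc
  have hc_pos : 0 < c :=
    mul_pos (Real.exp_pos _) (sub_pos.2 (Real.exp_lt_one_iff.2 neg_one_lt_zero))
  have hgap : 0 < c * (m - l) := mul_pos hc_pos (sub_pos.2 hl)
  have hle := eventually_forall_ge_atTop.2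
    (hmax.eventually_le_const (show m < m + c * (m - l) / 3 by linarith))
  have hge : ∀ᶠ t in atTop, m - c * (m - l) / 3 ≤ max (a (t + 1)) (b (t + 1)) :=
    (tendsto_atTop_add_const_right atTop 1 tendsto_id).eventually
      (hmax.eventually_const_le (by linarith))
  filter_upwards [hle, hge, eventually_ge_atTop 0] with t hle hge ht
  by_contra! hal
  have hdeficit := hab.max_le_of_deficit hba (M := m + c * (m - l) / 3) ht
    (fun s hs => (le_max_right _ _).trans (hle s hs.1)) (sub_pos.2 hl).le (by linarith)
  rw [← hc] at hdeficit
  linarith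

end Relaxation

section CommonZero

variable {E : Type*} [NormedAddCommGroup E] [InnerProductSpace ℝ E] [ProperSpace E]
  {H H₁ H₂ : E → E → ℝ} {u uo u₁ u₂ : E × ℝ → ℝ} {f f₁ f₂ : E → ℝ} {z : E} {B : ℝ}

lemma IsBackwardSub.relaxesTowards (h : IsBackwardSub (fun q p => H q.1 p + u q - uo q) u)
    (hu : Continuous u) (huo : Continuous uo) (hf : Continuous f) (hH : ∀ x p, -f x ≤ H x p)
    (hz : f z = 0) : RelaxesTowards (fun t => u (z, t)) fun t => uo (z, t) := by
  intro M t s ht hts hM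
  refine h.le_sub_mul_exp (g := fun q => -f q.1 + u q - uo q) hu (by fun_prop)
    (fun q p => by linarith [hH q.1 p]) ht hts fun r hr => ?_
  simp only [hz]
  linarith [hM r hr]

lemma IsBackwardSub.sup_of_system (h₁ : IsBackwardSub (fun q p => H₁ q.1 p + u₁ q - u₂ q) u₁)
    (h₂ : IsBackwardSub (fun q p => H₂ q.1 p + u₂ q - u₁ q) u₂) :
    IsBackwardSub (fun q p => min (H₁ q.1 p) (H₂ q.1 p)) fun q => max (u₁ q) (u₂ q) :=
  h₁.sup h₂ (fun q p hq => by linarith [min_le_left (H₁ q.1 p) (H₂ q.1 p)])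
    fun q p hq => by linarith [min_le_right (H₁ q.1 p) (H₂ q.1 p)]

lemma IsBackwardSub.antitoneOn_max (h₁ : IsBackwardSub (fun q p => H₁ q.1 p + u₁ q - u₂ q) u₁)
    (h₂ : IsBackwardSub (fun q p => H₂ q.1 p + u₂ q - u₁ q) u₂)
    (hu₁ : Continuous u₁) (hu₂ : Continuous u₂) (hf₁ : Continuous f₁) (hf₂ : Continuous f₂)
    (hH₁ : ∀ x p, -f₁ x ≤ H₁ x p) (hH₂ : ∀ x p, -f₂ x ≤ H₂ x p) (hz₁ : f₁ z = 0) (hz₂ : f₂ z = 0) :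
    AntitoneOn (fun t => max (u₁ (z, t)) (u₂ (z, t))) (Ici 0) := by
  intro t ht s _ hts
  have hle := (h₁.sup_of_system h₂).le_add_mul_sub (g := fun q => -(max (f₁ q.1) (f₂ q.1))) (C := 0)
    (x := z) (by fun_prop) (by fun_prop) (fun q p => ?_) ht hts fun r _ => by simp [hz₁, hz₂]
  · simpa using hle
  · exact le_min ((neg_le_neg (le_max_left _ _)).trans (hH₁ q.1 p))
      ((neg_le_neg (le_max_right _ _)).trans (hH₂ q.1 p))

lemma IsBackwardSub.exists_tendsto_of_common_zero
    (h₁ : IsBackwardSub (fun q p => H₁ q.1 p + u₁ q - u₂ q) u₁)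
    (h₂ : IsBackwardSub (fun q p => H₂ q.1 p + u₂ q - u₁ q) u₂)
    (hu₁ : Continuous u₁) (hu₂ : Continuous u₂) (hf₁ : Continuous f₁) (hf₂ : Continuous f₂)
    (hH₁ : ∀ x p, -f₁ x ≤ H₁ x p) (hH₂ : ∀ x p, -f₂ x ≤ H₂ x p) (hz₁ : f₁ z = 0) (hz₂ : f₂ z = 0)
    (hB : ∀ t, -B ≤ u₁ (z, t)) :
    ∃ m, Tendsto (fun t => u₁ (z, t)) atTop (𝓝 m) ∧ Tendsto (fun t => u₂ (z, t)) atTop (𝓝 m) := by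
  have hanti := h₁.antitoneOn_max h₂ hu₁ hu₂ hf₁ hf₂ hH₁ hH₂ hz₁ hz₂
  have hclamp : Antitone fun t => max (u₁ (z, max t 0)) (u₂ (z, max t 0)) := fun t s hts =>
    hanti (mem_Ici.2 (le_max_right t 0)) (mem_Ici.2 (le_max_right s 0)) (max_le_max_right 0 hts)
  have hbdd : BddBelow (range fun t => max (u₁ (z, max t 0)) (u₂ (z, max t 0))) :=
    ⟨-B, forall_mem_range.2 fun t => (hB _).trans (le_max_left _ _)⟩
  have hmax : Tendsto (fun t => max (u₁ (z, t)) (u₂ (z, t))) atTop _ :=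
    (tendsto_atTop_ciInf hclamp hbdd).congr' <| by
      filter_upwards [eventually_ge_atTop 0] with t ht
      rw [max_eq_left ht]
  have hrelax₁ := h₁.relaxesTowards hu₁ hu₂ hf₁ hH₁ hz₁
  have hrelax₂ := h₂.relaxesTowards hu₂ hu₁ hf₂ hH₂ hz₂
  exact ⟨_, hrelax₁.tendsto_of_tendsto_max hrelax₂ hmax,
    hrelax₂.tendsto_of_tendsto_max hrelax₁ (by simpa only [max_comm] using hmax)⟩

end CommonZero

section Doubling

lemma exists_mem_of_frequently_exists_mem {X Y : Type*} [TopologicalSpace X] [TopologicalSpace Y]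
    {K : Set Y} {S : Set (X × Y)} (hK : IsCompact K) (hS : IsClosed S) {x₀ : X}
    (hfreq : ∃ᶠ x in 𝓝 x₀, ∃ y ∈ K, (x, y) ∈ S) : ∃ y ∈ K, (x₀, y) ∈ S := by
  by_contra! hnot
  refine hfreq ?_
  filter_upwards [hK.eventually_forall_of_forall_eventually (P := fun x y => (x, y) ∉ S)
    fun y hy => hS.isOpen_compl.mem_nhds (hnot y hy)] with x hx hex
  obtain ⟨y, hy, hxy⟩ := hex
  exact hx y hy hxy

variable {n : ℕ} {a b : En n → ℝ} {Ha Hb : En n → En n → ℝ} {K : NNReal} {x₀ : En n}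

lemma frequently_isLocalMax_doubled (ha : Continuous a) (hb : Continuous b)
    (hmax : IsLocalMax (fun x => a x - b x) x₀) :
    ∃ᶠ z : En n × En n in 𝓝 (x₀, x₀), ∃ k : ℕ,
      IsLocalMax (fun y => a y.1 - b y.2 - ‖y.1 - x₀‖ ^ 2 - k * ‖y.1 - y.2‖ ^ 2) z := by
  have hstrict : ∀ᶠ z : En n × En n in 𝓝 (x₀, x₀), ‖z.1 - z.2‖ ^ 2 = 0 →
      a x₀ - b x₀ - ‖x₀ - x₀‖ ^ 2 ≤ a z.1 - b z.2 - ‖z.1 - x₀‖ ^ 2 → z = (x₀, x₀) := by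
    filter_upwards [continuous_fst.continuousAt.eventually hmax] with ⟨x, y⟩ hx hxy hge
    obtain rfl : x = y := by simpa [sub_eq_zero] using hxy
    have hzero : ‖x - x₀‖ ^ 2 = 0 :=
      le_antisymm (by simp only [sub_self, norm_zero] at hge; linarith) (sq_nonneg _)
    obtain rfl : x = x₀ := by simpa [sub_eq_zero] using hzero
    rfl
  simpa only [nhdsWithin_univ, IsLocalMaxOn, IsLocalMax] using
    frequently_isLocalMaxOn_sub_mul (g := fun z : En n × En n => a z.1 - b z.2 - ‖z.1 - x₀‖ ^ 2)
      (pen := fun z => ‖z.1 - z.2‖ ^ 2) (z₀ := (x₀, x₀)) (by fun_prop) (by fun_prop)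
      (fun z => sq_nonneg _) isClosed_univ (mem_univ _) (by simp) (by rwa [nhdsWithin_univ])

lemma gradient_norm_sub_sq_add_const_mul (x₀ y x : En n) (k : ℝ) :
    gradient (fun x => ‖x - x₀‖ ^ 2 + k * ‖x - y‖ ^ 2) x
      = (2 : ℝ) • (x - x₀) + k • (2 : ℝ) • (x - y) := by
  have hx₀ := hasGradientAt_norm_sub_sq x₀ x
  have hy := hasGradientAt_norm_sub_sq y x
  rw [gradient_fun_add hx₀.differentiableAt (hy.differentiableAt.const_mul k),
    gradient_fun_const_mul k hy.differentiableAt, hx₀.gradient, hy.gradient]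

lemma SingleSub.exists_momentum_of_isLocalMax_doubled (hsub : SingleSub Ha a 0)
    (ha : LipschitzWith K a) (hsuper : SingleSuper Hb b 0) {z : En n × En n} {k : ℕ}
    (hmax : IsLocalMax (fun y => a y.1 - b y.2 - ‖y.1 - x₀‖ ^ 2 - k * ‖y.1 - y.2‖ ^ 2) z) :
    ∃ p ∈ Metric.closedBall (0 : En n) K, Ha z.1 p ≤ 0 ∧ 0 ≤ Hb z.2 (p - (2 : ℝ) • (z.1 - x₀)) := by
  obtain ⟨x, y⟩ := z
  have hmax_fst : IsLocalMax (fun x => a x - (‖x - x₀‖ ^ 2 + k * ‖x - y‖ ^ 2)) x := by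
    have hcont : ContinuousAt (fun x => (x, y)) x := by fun_prop
    filter_upwards [hcont.eventually hmax] with x' hx'
    linarith
  have hmin_snd : IsLocalMin (fun y => b y - -k * ‖y - x‖ ^ 2) y := by
    have hcont : ContinuousAt (fun y => (x, y)) y := by fun_prop
    filter_upwards [hcont.eventually hmax] with y' hy'
    rw [norm_sub_rev y' x, norm_sub_rev y x]
    linarith
  have hsmooth : ContDiff ℝ 1 fun x => ‖x - x₀‖ ^ 2 + (k : ℝ) * ‖x - y‖ ^ 2 :=
    (contDiff_norm_sub_sq x₀).add (contDiff_const.mul (contDiff_norm_sub_sq y))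
  have hle := hsub _ hsmooth x hmax_fst
  have hge := hsuper _ (contDiff_const.mul (contDiff_norm_sub_sq x)) y hmin_snd
  have hbound := norm_gradient_le_of_isLocalMax ha (hsmooth.differentiable one_ne_zero x) hmax_fst
  rw [gradient_norm_sub_sq_add_const_mul] at hle hbound
  have hy := hasGradientAt_norm_sub_sq x y
  rw [gradient_fun_const_mul _ hy.differentiableAt, hy.gradient, neg_smul, ← smul_neg, ← smul_neg,
    neg_sub] at hge
  exact ⟨_, mem_closedBall_zero_iff.2 hbound, hle, by rwa [add_sub_cancel_left]⟩

lemma SingleSub.exists_momentum_of_isLocalMax_sub (hsub : SingleSub Ha a 0)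
    (ha : LipschitzWith K a) (hsuper : SingleSuper Hb b 0) (hb : Continuous b)
    (hHa : Continuous fun q : En n × En n => Ha q.1 q.2)
    (hHb : Continuous fun q : En n × En n => Hb q.1 q.2)
    (hmax : IsLocalMax (fun x => a x - b x) x₀) : ∃ p, Ha x₀ p ≤ 0 ∧ 0 ≤ Hb x₀ p := by
  have hclosed : IsClosed {w : (En n × En n) × En n |
      Ha w.1.1 w.2 ≤ 0 ∧ 0 ≤ Hb w.1.2 (w.2 - (2 : ℝ) • (w.1.1 - x₀))} :=
    .and (isClosed_le (by fun_prop) continuous_const) (isClosed_le continuous_const (by fun_prop))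
  obtain ⟨p, -, hp⟩ := exists_mem_of_frequently_exists_mem (x₀ := (x₀, x₀))
    (isCompact_closedBall (0 : En n) K) hclosed <|
    (frequently_isLocalMax_doubled ha.continuous hb hmax).mono fun z ⟨_, hz⟩ =>
      hsub.exists_momentum_of_isLocalMax_doubled ha hsuper hz
  exact ⟨p, by simpa using hp⟩

end Doubling

section Comparison

variable {n : ℕ} {F F₁ F₂ : En n → En n → ℝ} {f f₁ f₂ V Vo W Wo V₁ V₂ W₁ W₂ : En n → ℝ}
  {K K₁ K₂ : NNReal} {l l₀ : ℝ} {x₀ : En n}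

lemma StatSubIneq.singleSub_const_mul
    (h : StatSubIneq (fun x p => F x p - f x) 1 V Vo fun _ => 0) (hl : 0 < l) :
    SingleSub (fun x p => F x (l⁻¹ • p) - f x + (V x - Vo x)) (fun x => l * V x) 0 := by
  intro φ hφ x₀ hmax
  have hscaled : IsLocalMax (fun x => V x - l⁻¹ * φ x) x₀ := by
    filter_upwards [hmax] with x hx
    have hle := mul_le_mul_of_nonneg_left hx (inv_nonneg.2 hl.le)
    simpa only [mul_sub, inv_mul_cancel_left₀ hl.ne'] using hle
  have hineq := h _ (contDiff_const.mul hφ) x₀ hscaled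
  rw [gradient_fun_const_mul _ (hφ.differentiable one_ne_zero x₀)] at hineq
  linarith

-- Scaling a subsolution by `l < 1` wins the margin `(1 - l) * f` where the forcing is positive.
lemma StatSubIneq.forcing_le_of_isLocalMax
    (hV : StatSubIneq (fun x p => F x p - f x) 1 V Vo fun _ => 0)
    (hW : StatSuperIneq (fun x p => F x p - f x) 1 W Wo fun _ => 0)
    (hF : Continuous fun q : En n × En n => F q.1 q.2) (hf : Continuous f)
    (hV_lip : LipschitzWith K V) (hVo_cont : Continuous Vo) (hW_cont : Continuous W)
    (hWo_cont : Continuous Wo) (hl : 0 < l) (hscale : ∀ p, F x₀ (l • p) ≤ l * F x₀ p)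
    (hmax : IsLocalMax (fun x => l * V x - W x) x₀) :
    (1 - l) * f x₀ ≤ (l * Vo x₀ - Wo x₀) - (l * V x₀ - W x₀) := by
  have hV_cont := hV_lip.continuous
  have hsuper : SingleSuper (fun x p => F x p - f x + (W x - Wo x)) W 0 :=
    fun φ hφ x hmin => by simpa only [one_mul] using hW φ hφ x hmin
  have hlV : LipschitzWith (‖l‖₊ * K) fun x => l * V x := (lipschitzWith_smul l).comp hV_lip
  obtain ⟨p, hsub_p, hsuper_p⟩ := (hV.singleSub_const_mul hl).exists_momentum_of_isLocalMax_sub hlV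
    hsuper hW_cont (by fun_prop) (by fun_prop) hmax
  have hscale_p := hscale (l⁻¹ • p)
  rw [smul_inv_smul₀ hl.ne'] at hscale_p
  linarith [mul_nonpos_of_nonneg_of_nonpos hl.le hsub_p]

lemma ErgSub.forcing_eq_zero_of_forall_le
    (hV : ErgSub (fun x p => F₁ x p - f₁ x) (fun x p => F₂ x p - f₂ x) V₁ V₂ 0)
    (hW : ErgSuper (fun x p => F₁ x p - f₁ x) (fun x p => F₂ x p - f₂ x) W₁ W₂ 0)
    (hF₁ : Continuous fun q : En n × En n => F₁ q.1 q.2)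
    (hF₂ : Continuous fun q : En n × En n => F₂ q.1 q.2) (hf₁ : Continuous f₁) (hf₂ : Continuous f₂)
    (hf₁_nonneg : 0 ≤ f₁ x₀) (hf₂_nonneg : 0 ≤ f₂ x₀)
    (hV₁ : LipschitzWith K₁ V₁) (hV₂ : LipschitzWith K₂ V₂) (hW₁ : Continuous W₁)
    (hW₂ : Continuous W₂) (hl : 0 < l) (hl_lt : l < 1)
    (hscale : ∀ p, F₁ x₀ (l • p) ≤ l * F₁ x₀ p ∧ F₂ x₀ (l • p) ≤ l * F₂ x₀ p)
    (hmax : ∀ x, max (l * V₁ x - W₁ x) (l * V₂ x - W₂ x)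
      ≤ max (l * V₁ x₀ - W₁ x₀) (l * V₂ x₀ - W₂ x₀)) :
    f₁ x₀ = 0 ∧ f₂ x₀ = 0 := by
  have hdefect₁ (hle : l * V₂ x₀ - W₂ x₀ ≤ l * V₁ x₀ - W₁ x₀) :=
    hV.1.forcing_le_of_isLocalMax hW.1 hF₁ hf₁ hV₁ hV₂.continuous hW₁ hW₂ hl
      (fun p => (hscale p).1)
      (.of_forall fun x => (le_max_left _ _).trans ((hmax x).trans_eq (max_eq_left hle)))
  have hdefect₂ (hle : l * V₁ x₀ - W₁ x₀ ≤ l * V₂ x₀ - W₂ x₀) :=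
    hV.2.forcing_le_of_isLocalMax hW.2 hF₂ hf₂ hV₂ hV₁.continuous hW₂ hW₁ hl
      (fun p => (hscale p).2)
      (.of_forall fun x => (le_max_right _ _).trans ((hmax x).trans_eq (max_eq_right hle)))
  have hmargin₁ : 0 ≤ (1 - l) * f₁ x₀ := mul_nonneg (sub_pos.2 hl_lt).le hf₁_nonneg
  have hmargin₂ : 0 ≤ (1 - l) * f₂ x₀ := mul_nonneg (sub_pos.2 hl_lt).le hf₂_nonneg
  have heq : l * V₁ x₀ - W₁ x₀ = l * V₂ x₀ - W₂ x₀ := by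
    rcases le_total (l * V₁ x₀ - W₁ x₀) (l * V₂ x₀ - W₂ x₀) with hle | hle
    · linarith [hdefect₂ hle]
    · linarith [hdefect₁ hle]
  have hzero {c : ℝ} (hc : 0 ≤ (1 - l) * c) (hc' : (1 - l) * c ≤ 0) : c = 0 :=
    (mul_eq_zero.1 (le_antisymm hc' hc)).resolve_left (sub_pos.2 hl_lt).ne'
  exact ⟨hzero hmargin₁ (by linarith [hdefect₁ heq.ge]),
    hzero hmargin₂ (by linarith [hdefect₂ heq.le])⟩

lemma le_of_forall_mem_Ico_mul_sub_le {v w B : ℝ} (hl₀ : l₀ < 1)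
    (h : ∀ l ∈ Ico l₀ 1, l * v - w ≤ (1 - l) * B) : v ≤ w := by
  have hcont : Continuous fun l => (1 - l) * B - (l * v - w) := by fun_prop
  have hlim := ge_of_tendsto (b := 0) (hcont.continuousWithinAt (s := Iio 1) (x := 1)) <| by
    filter_upwards [Ico_mem_nhdsLT hl₀] with l hl
    linarith [h l hl]
  linarith

lemma ErgSub.le_of_le_on_zeros
    (hV : ErgSub (fun x p => F₁ x p - f₁ x) (fun x p => F₂ x p - f₂ x) V₁ V₂ 0)
    (hW : ErgSuper (fun x p => F₁ x p - f₁ x) (fun x p => F₂ x p - f₂ x) W₁ W₂ 0)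
    (hF₁ : Continuous fun q : En n × En n => F₁ q.1 q.2)
    (hF₂ : Continuous fun q : En n × En n => F₂ q.1 q.2) (hf₁ : Continuous f₁) (hf₂ : Continuous f₂)
    (hf_nonneg : ∀ x, 0 ≤ f₁ x ∧ 0 ≤ f₂ x)
    (hV₁ : LipschitzWith K₁ V₁) (hV₂ : LipschitzWith K₂ V₂) (hW₁ : Continuous W₁)
    (hW₂ : Continuous W₂) (hV₁_per : ZPeriodic V₁) (hV₂_per : ZPeriodic V₂)
    (hW₁_per : ZPeriodic W₁) (hW₂_per : ZPeriodic W₂) (hl₀ : 0 < l₀) (hl₀_lt : l₀ < 1)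
    (hscale : ∀ l, l₀ ≤ l → l ≤ 1 → ∀ x, ¬(f₁ x = 0 ∧ f₂ x = 0) →
      ∀ p, F₁ x (l • p) ≤ l * F₁ x p ∧ F₂ x (l • p) ≤ l * F₂ x p)
    (hzeros : ∀ x, f₁ x = 0 → f₂ x = 0 → V₁ x ≤ W₁ x ∧ V₂ x ≤ W₂ x) (x : En n) :
    V₁ x ≤ W₁ x ∧ V₂ x ≤ W₂ x := by
  have hV₁_cont := hV₁.continuous
  have hV₂_cont := hV₂.continuous
  obtain ⟨z, hz⟩ := ZPeriodic.exists_forall_le (f := fun x => max (-W₁ x) (-W₂ x))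
    (fun x k => by simp only [hW₁_per x k, hW₂_per x k]) (by fun_prop)
  have hscaled : ∀ l ∈ Ico l₀ 1,
      max (l * V₁ x - W₁ x) (l * V₂ x - W₂ x) ≤ (1 - l) * max (-W₁ z) (-W₂ z) := fun l hl => by
    obtain ⟨x₀, hx₀⟩ := ZPeriodic.exists_forall_le
      (f := fun x => max (l * V₁ x - W₁ x) (l * V₂ x - W₂ x))
      (fun x k => by simp only [hV₁_per x k, hV₂_per x k, hW₁_per x k, hW₂_per x k]) (by fun_prop)
    have hl_pos : 0 < l := hl₀.trans_le hl.1
    have hf_zero : f₁ x₀ = 0 ∧ f₂ x₀ = 0 := by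
      by_contra hne
      exact hne (hV.forcing_eq_zero_of_forall_le hW hF₁ hF₂ hf₁ hf₂ (hf_nonneg x₀).1
        (hf_nonneg x₀).2 hV₁ hV₂ hW₁ hW₂ hl_pos hl.2 (hscale l hl.1 hl.2.le x₀ hne) hx₀)
    obtain ⟨hle₁, hle₂⟩ := hzeros x₀ hf_zero.1 hf_zero.2
    refine (hx₀ x).trans (max_le ?_ ?_)
    · nlinarith [(le_max_left _ _).trans (hz x₀), sub_pos.2 hl.2]
    · nlinarith [(le_max_right _ _).trans (hz x₀), sub_pos.2 hl.2]
  exact ⟨le_of_forall_mem_Ico_mul_sub_le hl₀_lt fun l hl => (le_max_left _ _).trans (hscaled l hl),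
    le_of_forall_mem_Ico_mul_sub_le hl₀_lt fun l hl => (le_max_right _ _).trans (hscaled l hl)⟩

end Comparison

section Clamp

variable {n : ℕ} {H H₁ H₂ : En n → En n → ℝ} {u uo u₁ u₂ : En n × ℝ → ℝ} {u₀₁ u₀₂ : En n → ℝ}

/-- The extension of `u : ℝ^n × [0,∞) → ℝ` to all times by its initial value; it discards the values
of `u` at negative times, on which a solution of (C) imposes no condition. -/
def clampTime {E : Type*} (u : E × ℝ → ℝ) (q : E × ℝ) : ℝ := u (q.1, max q.2 0)

lemma clampTime_of_nonneg {E : Type*} (u : E × ℝ → ℝ) {q : E × ℝ} (hq : 0 ≤ q.2) :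
    clampTime u q = u q := by
  rw [clampTime, max_eq_left hq]

lemma clampTime_eventuallyEq {E : Type*} [TopologicalSpace E] (u : E × ℝ → ℝ) (x₀ : E) {t₀ : ℝ}
    (ht : 0 < t₀) : clampTime u =ᶠ[𝓝 (x₀, t₀)] u := by
  filter_upwards [continuousAt_snd.eventually (lt_mem_nhds ht)] with q hq
  exact clampTime_of_nonneg u (le_of_lt hq)

lemma continuous_clampTime {E : Type*} [TopologicalSpace E] {u : E × ℝ → ℝ}
    (hu : ContinuousOn u {q | 0 ≤ q.2}) : Continuous (clampTime u) :=
  hu.comp_continuous (f := fun q : E × ℝ => (q.1, max q.2 0)) (by fun_prop)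
    fun q => mem_ofPred.2 (le_max_right q.2 0)

lemma ZPeriodicST.clampTime (hper : ZPeriodicST u) : ZPeriodicST (clampTime u) :=
  fun x k t => hper x k (max t 0)

lemma EvolSubIneq.clampTime (h : EvolSubIneq H u uo) :
    EvolSubIneq H (clampTime u) (clampTime uo) := by
  intro φ hφ x₀ t₀ ht hmax
  have hineq := h φ hφ x₀ t₀ ht
    (hmax.congr ((clampTime_eventuallyEq u x₀ ht).sub (.refl _ φ)))
  rwa [clampTime_of_nonneg u ht.le, clampTime_of_nonneg uo ht.le]

lemma EvolSuperIneq.clampTime (h : EvolSuperIneq H u uo) :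
    EvolSuperIneq H (clampTime u) (clampTime uo) := by
  intro φ hφ x₀ t₀ ht hmin
  have hineq := h φ hφ x₀ t₀ ht
    (hmin.congr ((clampTime_eventuallyEq u x₀ ht).sub (.refl _ φ)))
  rwa [clampTime_of_nonneg u ht.le, clampTime_of_nonneg uo ht.le]

/-- A continuous periodic subsolution of (C), defined for all times while the equations are imposed
only at positive ones. Supersolutions `(u₁, u₂)` are treated as the subsolutions `(-u₁, -u₂)` for
the Hamiltonians `-Hᵢ(x, -p)`. -/
structure IsPeriodicSub (H₁ H₂ : En n → En n → ℝ) (u₁ u₂ : En n × ℝ → ℝ) : Prop where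
  continuous_fst : Continuous u₁
  continuous_snd : Continuous u₂
  periodic_fst : ZPeriodicST u₁
  periodic_snd : ZPeriodicST u₂
  sysSub : SysSub H₁ H₂ u₁ u₂

lemma SysSolution.isPeriodicSub_clampTime (h : SysSolution H₁ H₂ u₀₁ u₀₂ u₁ u₂)
    (hper₁ : ZPeriodicST u₁) (hper₂ : ZPeriodicST u₂) :
    IsPeriodicSub H₁ H₂ (clampTime u₁) (clampTime u₂) := by
  obtain ⟨hu₁, hu₂, hsub, -⟩ := h
  exact ⟨continuous_clampTime hu₁, continuous_clampTime hu₂, hper₁.clampTime, hper₂.clampTime,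
    hsub.1.clampTime, hsub.2.clampTime⟩

lemma SysSolution.isPeriodicSub_neg_clampTime (h : SysSolution H₁ H₂ u₀₁ u₀₂ u₁ u₂)
    (hper₁ : ZPeriodicST u₁) (hper₂ : ZPeriodicST u₂) :
    IsPeriodicSub (fun x p => -H₁ x (-p)) (fun x p => -H₂ x (-p))
      (fun q => -clampTime u₁ q) fun q => -clampTime u₂ q := by
  obtain ⟨hu₁, hu₂, -, hsuper, -⟩ := h
  exact ⟨(continuous_clampTime hu₁).neg, (continuous_clampTime hu₂).neg, hper₁.clampTime.neg,
    hper₂.clampTime.neg, hsuper.1.clampTime.neg, hsuper.2.clampTime.neg⟩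

end Clamp

section LongTime

variable {n : ℕ} {H H₁ H₂ F : En n → En n → ℝ} {u uo u₁ u₂ : En n × ℝ → ℝ} {f f₁ f₂ : En n → ℝ}
  {z : En n} {B C : ℝ}

lemma IsPeriodicSub.symm (h : IsPeriodicSub H₁ H₂ u₁ u₂) : IsPeriodicSub H₂ H₁ u₂ u₁ :=
  ⟨h.continuous_snd, h.continuous_fst, h.periodic_snd, h.periodic_fst, h.sysSub.symm⟩

lemma IsPeriodicSub.isBackwardSub (h : IsPeriodicSub H₁ H₂ u₁ u₂)
    (hH₁ : Continuous fun q : En n × En n => H₁ q.1 q.2) :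
    IsBackwardSub (fun q p => H₁ q.1 p + u₁ q - u₂ q) u₁ := by
  have hu₁ := h.continuous_fst
  have hu₂ := h.continuous_snd
  exact h.sysSub.1.isSepSub.isBackwardSub hu₁ (by fun_prop)

lemma IsPeriodicSub.exists_forall_initial_le (h : IsPeriodicSub H₁ H₂ u₁ u₂) :
    ∃ M, ∀ x, max (u₁ (x, 0)) (u₂ (x, 0)) ≤ M := by
  have hu₁ := h.continuous_fst
  have hu₂ := h.continuous_snd
  obtain ⟨x₀, hx₀⟩ := ZPeriodic.exists_forall_le (f := fun x => max (u₁ (x, 0)) (u₂ (x, 0)))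
    (fun x k => (h.periodic_fst.sup h.periodic_snd) x k 0) (by fun_prop)
  exact ⟨_, hx₀⟩

lemma IsPeriodicSub.exists_forall_max_le_of_nonneg_at_zero (h : IsPeriodicSub H₁ H₂ u₁ u₂)
    (hH₁ : Continuous fun q : En n × En n => H₁ q.1 q.2)
    (hH₂ : Continuous fun q : En n × En n => H₂ q.1 q.2)
    (hzero₁ : ∀ x, 0 ≤ H₁ x 0) (hzero₂ : ∀ x, 0 ≤ H₂ x 0) :
    ∃ M, ∀ x, ∀ t ≥ 0, max (u₁ (x, t)) (u₂ (x, t)) ≤ M := by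
  obtain ⟨M, hM⟩ := h.exists_forall_initial_le
  exact ⟨M, fun x t ht =>
    ((h.isBackwardSub hH₁).sup_of_system (h.symm.isBackwardSub hH₂)).le_of_forall_initial_le
      (h.continuous_fst.max h.continuous_snd) (h.periodic_fst.sup h.periodic_snd)
      (fun q => le_min (hzero₁ q.1) (hzero₂ q.1)) hM ht x⟩

-- At a common zero of the `fᵢ` the maximum decreases, and the cone estimate spreads its initial
-- bound from there to a whole period.
lemma IsPeriodicSub.exists_forall_max_le_of_common_zero (h : IsPeriodicSub H₁ H₂ u₁ u₂)
    (hH₁ : Continuous fun q : En n × En n => H₁ q.1 q.2)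
    (hH₂ : Continuous fun q : En n × En n => H₂ q.1 q.2)
    (hcoer₁ : Coercive H₁) (hcoer₂ : Coercive H₂) (hf₁ : Continuous f₁) (hf₂ : Continuous f₂)
    (hlow₁ : ∀ x p, -f₁ x ≤ H₁ x p) (hlow₂ : ∀ x p, -f₂ x ≤ H₂ x p)
    (hz₁ : f₁ z = 0) (hz₂ : f₂ z = 0) :
    ∃ M, ∀ x, ∀ t ≥ 0, max (u₁ (x, t)) (u₂ (x, t)) ≤ M := by
  obtain ⟨M, hM⟩ := h.exists_forall_initial_le
  obtain ⟨r₁, hr₁⟩ := hcoer₁ 1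
  obtain ⟨r₂, hr₂⟩ := hcoer₂ 1
  have hback₁ := h.isBackwardSub hH₁
  have hback₂ := h.symm.isBackwardSub hH₂
  have hcont := h.continuous_fst.max h.continuous_snd
  have hper := h.periodic_fst.sup h.periodic_snd
  have hanti := hback₁.antitoneOn_max hback₂ h.continuous_fst h.continuous_snd hf₁ hf₂ hlow₁ hlow₂
    hz₁ hz₂
  have hcone (y : En n) {t : ℝ} (ht : 0 ≤ t) :
      max (u₁ (y, t)) (u₂ (y, t)) ≤ M + 2 * max (max r₁ r₂) 1 * ‖y - z‖ := by
    obtain ⟨q₀, -, hmax⟩ := hper.exists_isMaxOn hcont ht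
    refine (hback₁.sup_of_system hback₂).le_add_mul_norm_sub hcont le_rfl ht le_rfl
      (by positivity) (fun q hq => hmax hq)
      (fun s hs => (hanti (mem_Ici.2 le_rfl) (mem_Ici.2 hs.1) hs.1).trans (hM z))
      (fun y => by simpa using hM y) (fun q _ p hp => lt_min ?_ ?_) y
    · linarith [hr₁ q.1 p (((le_max_left _ _).trans (le_max_left _ _)).trans hp)]
    · linarith [hr₂ q.1 p (((le_max_right _ _).trans (le_max_left _ _)).trans hp)]
  obtain ⟨K, hK, hcell⟩ := exists_isCompact_forall_add_intVec_mem n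
  obtain ⟨D, hD⟩ := hK.exists_bound_of_continuousOn (f := fun y => y - z) (by fun_prop)
  refine ⟨M + 2 * max (max r₁ r₂) 1 * D, fun x t ht => ?_⟩
  obtain ⟨k, hk⟩ := hcell x
  calc max (u₁ (x, t)) (u₂ (x, t))
      = max (u₁ (x + intVec n k, t)) (u₂ (x + intVec n k, t)) := (hper x k t).symm
    _ ≤ M + 2 * max (max r₁ r₂) 1 * ‖x + intVec n k - z‖ := hcone _ ht
    _ ≤ M + 2 * max (max r₁ r₂) 1 * D := by gcongr; exact hD _ hk

lemma exists_forall_abs_clampTime_le_of_max_le (hle : ∃ M, ∀ x, ∀ t ≥ 0,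
      max (clampTime u₁ (x, t)) (clampTime u₂ (x, t)) ≤ M)
    (hge : ∃ M, ∀ x, ∀ t ≥ 0, max (-clampTime u₁ (x, t)) (-clampTime u₂ (x, t)) ≤ M) :
    ∃ B, (∀ q, |clampTime u₁ q| ≤ B) ∧ ∀ q, |clampTime u₂ q| ≤ B := by
  obtain ⟨M, hM⟩ := hle
  obtain ⟨M', hM'⟩ := hge
  have hbound (q : En n × ℝ) : max |clampTime u₁ q| |clampTime u₂ q| ≤ max M M' := by
    have hclamp (u : En n × ℝ → ℝ) : clampTime u (q.1, max q.2 0) = clampTime u q := by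
      simp only [clampTime, max_assoc, max_self]
    have hup := hM q.1 (max q.2 0) (le_max_right _ _)
    have hdown := hM' q.1 (max q.2 0) (le_max_right _ _)
    rw [hclamp, hclamp] at hup hdown
    simp only [abs, ← max_max_max_comm]
    exact max_le_max hup hdown
  exact ⟨max M M', fun q => (le_max_left _ _).trans (hbound q),
    fun q => (le_max_right _ _).trans (hbound q)⟩

lemma Coercive.sub_of_forall_le (hF : Coercive F) (hf : ∀ x, f x ≤ C) :
    Coercive fun x p => F x p - f x := fun M => by
  obtain ⟨r, hr⟩ := hF (M + C)
  exact ⟨r, fun x p hp => by linarith [hr x p hp, hf x]⟩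

lemma Coercive.add_coupling (hH : Coercive H) (hu : ∀ q, |u q| ≤ B) (huo : ∀ q, |uo q| ≤ B)
    (M : ℝ) : ∃ r, ∀ (q : En n × ℝ) p, r ≤ ‖p‖ → M ≤ H q.1 p + u q - uo q := by
  obtain ⟨r, hr⟩ := hH (M + 2 * B)
  exact ⟨r, fun q p hp => by
    linarith [hr q.1 p hp, (abs_le.1 (hu q)).1, (abs_le.1 (huo q)).2]⟩

lemma IsPeriodicSub.lipschitzWith_and_isAsympBelowUpperLimit (h : IsPeriodicSub H₁ H₂ u₁ u₂)
    (hH₁ : Continuous fun q : En n × En n => H₁ q.1 q.2) (hcoer : Coercive H₁)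
    (hlow : ∀ x p, -C ≤ H₁ x p) (hB₁ : ∀ q, |u₁ q| ≤ B) (hB₂ : ∀ q, |u₂ q| ≤ B) :
    (∃ K, LipschitzWith K (upperLimit u₁)) ∧ IsAsympBelowUpperLimit u₁ ∧
      IsAsympBelowUpperLimit fun q => -u₁ q := by
  have hback := h.isBackwardSub hH₁
  have hcoer' := hcoer.add_coupling hB₁ hB₂
  refine ⟨hback.exists_lipschitzWith_upperLimit h.continuous_fst hB₁ hcoer',
    hback.isAsympBelowUpperLimit h.continuous_fst hB₁ hcoer',
    hback.isAsympBelowUpperLimit_neg (C := |C| + 2 * B + 1) h.continuous_fst hB₁ hcoer' ?_ ?_⟩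
  · linarith [abs_nonneg C, (abs_nonneg _).trans (hB₁ 0)]
  · intro q p
    linarith [le_abs_self C, hlow q.1 p, (abs_le.1 (hB₁ q)).1, (abs_le.1 (hB₂ q)).2]

lemma IsPeriodicSub.statSubIneq_upperLimit (h : IsPeriodicSub H₁ H₂ u₁ u₂)
    (hH₁ : Continuous fun q : En n × En n => H₁ q.1 q.2)
    (hB₁ : ∀ q, |u₁ q| ≤ B) (hB₂ : ∀ q, |u₂ q| ≤ B)
    (hbelow₁ : IsAsympBelowUpperLimit u₁) (hbelow₂ : IsAsympBelowUpperLimit u₂) :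
    StatSubIneq H₁ 1 (upperLimit u₁) (upperLimit u₂) fun _ => 0 :=
  h.sysSub.1.isSepSub.statSubIneq h.continuous_fst hH₁ (hbelow₂.continuous hB₂)
    (fun _ hε => hbelow₁.eventually_forall_le hB₁ h.periodic_fst hε)
    (fun _ hε => hbelow₂.eventually_forall_le hB₂ h.periodic_snd hε)
    fun x _ hε => frequently_upperLimit_sub_lt hB₁ hε x

lemma IsPeriodicSub.ergSub_upperLimit (h : IsPeriodicSub H₁ H₂ u₁ u₂)
    (hH₁ : Continuous fun q : En n × En n => H₁ q.1 q.2)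
    (hH₂ : Continuous fun q : En n × En n => H₂ q.1 q.2)
    (hB₁ : ∀ q, |u₁ q| ≤ B) (hB₂ : ∀ q, |u₂ q| ≤ B)
    (hbelow₁ : IsAsympBelowUpperLimit u₁) (hbelow₂ : IsAsympBelowUpperLimit u₂) :
    ErgSub H₁ H₂ (upperLimit u₁) (upperLimit u₂) 0 :=
  ⟨h.statSubIneq_upperLimit hH₁ hB₁ hB₂ hbelow₁ hbelow₂,
    h.symm.statSubIneq_upperLimit hH₂ hB₂ hB₁ hbelow₂ hbelow₁⟩

lemma ErgSuper.of_neg {V₁ V₂ : En n → ℝ}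
    (h : ErgSub (fun x p => -H₁ x (-p)) (fun x p => -H₂ x (-p)) V₁ V₂ 0) :
    ErgSuper H₁ H₂ (fun x => -V₁ x) (fun x => -V₂ x) 0 :=
  ⟨StatSuperIneq.of_neg (by simpa only [neg_neg] using h.1),
    StatSuperIneq.of_neg (by simpa only [neg_neg] using h.2)⟩

lemma upperLimit_eq_neg_upperLimit_neg_of_tendsto {E : Type*} {u : E × ℝ → ℝ} {x : E} {m : ℝ}
    (h : Tendsto (fun t => u (x, t)) atTop (𝓝 m)) :
    upperLimit u x = -upperLimit (fun q => -u q) x := by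
  rw [upperLimit, upperLimit, h.limsup_eq, h.neg.limsup_eq, neg_neg]

lemma unifTendsTo_of_upperLimit_eq (hB : ∀ q, |u q| ≤ B) (hper : ZPeriodicST u)
    (hbelow : IsAsympBelowUpperLimit u) (hbelow_neg : IsAsympBelowUpperLimit fun q => -u q)
    (heq : ∀ x, upperLimit u x = -upperLimit (fun q => -u q) x) : UnifTendsTo u (upperLimit u) := by
  intro ε hε
  have hneg := hbelow_neg.eventually_forall_le (by simpa only [abs_neg] using hB) hper.neg hε
  refine eventually_atTop.1 ?_
  filter_upwards [hbelow.eventually_forall_le hB hper hε, hneg] with t hup hdown x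
  exact abs_le.2 ⟨by linarith [hdown x, heq x], by linarith [hup x]⟩

lemma UnifTendsTo.of_clampTime {v : En n → ℝ} (h : UnifTendsTo (clampTime u) v) :
    UnifTendsTo u v := fun ε hε => by
  obtain ⟨T, hT⟩ := h ε hε
  refine ⟨max T 0, fun t ht x => ?_⟩
  simpa only [clampTime_of_nonneg u (q := (x, t)) ((le_max_right T 0).trans ht)] using
    hT t ((le_max_left T 0).trans ht) x

end LongTime

section Convergence

variable {n : ℕ} {F F₁ F₂ : En n → En n → ℝ} {f f₁ f₂ : En n → ℝ} {u₁ u₂ : En n × ℝ → ℝ}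
  {z : En n} {B : ℝ}

/-- The conditions (A1), (A2) and (A5) on one Hamiltonian `F(x,p) - f(x)`. -/
structure IsForcedHamiltonian (F : En n → En n → ℝ) (f : En n → ℝ) : Prop where
  continuous_kinetic : Continuous fun q : En n × En n => F q.1 q.2
  coercive_kinetic : Coercive F
  kinetic_nonneg : ∀ x p, 0 ≤ F x p
  kinetic_zero : ∀ x, F x 0 = 0
  continuous_forcing : Continuous f
  periodic_forcing : ZPeriodic f
  forcing_nonneg : ∀ x, 0 ≤ f x

namespace IsForcedHamiltonian

lemma continuous (h : IsForcedHamiltonian F f) :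
    Continuous fun q : En n × En n => F q.1 q.2 - f q.1 :=
  h.continuous_kinetic.sub (h.continuous_forcing.comp continuous_fst)

lemma continuous_reflection (h : IsForcedHamiltonian F f) :
    Continuous fun q : En n × En n => -(F q.1 (-q.2) - f q.1) :=
  (h.continuous.comp (continuous_fst.prodMk continuous_snd.neg)).neg

lemma coercive (h : IsForcedHamiltonian F f) : Coercive fun x p => F x p - f x := by
  obtain ⟨x₀, hx₀⟩ := h.periodic_forcing.exists_forall_le h.continuous_forcing
  exact h.coercive_kinetic.sub_of_forall_le hx₀

lemma neg_forcing_le (h : IsForcedHamiltonian F f) (x p : En n) : -f x ≤ F x p - f x := by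
  linarith [h.kinetic_nonneg x p]

lemma exists_forall_neg_le (h : IsForcedHamiltonian F f) : ∃ C, ∀ x p, -C ≤ F x p - f x := by
  obtain ⟨x₀, hx₀⟩ := h.periodic_forcing.exists_forall_le h.continuous_forcing
  exact ⟨f x₀, fun x p => (neg_le_neg (hx₀ x)).trans (h.neg_forcing_le x p)⟩

lemma reflection_zero_nonneg (h : IsForcedHamiltonian F f) (x : En n) :
    0 ≤ -(F x (-0) - f x) := by
  rw [neg_zero, h.kinetic_zero]
  linarith [h.forcing_nonneg x]

lemma exists_forall_abs_clampTime_le (hF₁ : IsForcedHamiltonian F₁ f₁)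
    (hF₂ : IsForcedHamiltonian F₂ f₂)
    (hsub : IsPeriodicSub (fun x p => F₁ x p - f₁ x) (fun x p => F₂ x p - f₂ x)
      (clampTime u₁) (clampTime u₂))
    (hsuper : IsPeriodicSub (fun x p => -(F₁ x (-p) - f₁ x)) (fun x p => -(F₂ x (-p) - f₂ x))
      (fun q => -clampTime u₁ q) fun q => -clampTime u₂ q)
    (hz₁ : f₁ z = 0) (hz₂ : f₂ z = 0) :
    ∃ B, (∀ q, |clampTime u₁ q| ≤ B) ∧ ∀ q, |clampTime u₂ q| ≤ B :=
  exists_forall_abs_clampTime_le_of_max_le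
    (hsub.exists_forall_max_le_of_common_zero hF₁.continuous hF₂.continuous hF₁.coercive
      hF₂.coercive hF₁.continuous_forcing hF₂.continuous_forcing hF₁.neg_forcing_le
      hF₂.neg_forcing_le hz₁ hz₂)
    (hsuper.exists_forall_max_le_of_nonneg_at_zero hF₁.continuous_reflection
      hF₂.continuous_reflection hF₁.reflection_zero_nonneg hF₂.reflection_zero_nonneg)

lemma exists_tendsto_of_common_zero (hF₁ : IsForcedHamiltonian F₁ f₁)
    (hF₂ : IsForcedHamiltonian F₂ f₂)
    (hsub : IsPeriodicSub (fun x p => F₁ x p - f₁ x) (fun x p => F₂ x p - f₂ x) u₁ u₂)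
    (hB : ∀ q, |u₁ q| ≤ B) (hz₁ : f₁ z = 0) (hz₂ : f₂ z = 0) :
    ∃ m, Tendsto (fun t => u₁ (z, t)) atTop (𝓝 m) ∧ Tendsto (fun t => u₂ (z, t)) atTop (𝓝 m) :=
  (hsub.isBackwardSub hF₁.continuous).exists_tendsto_of_common_zero
    (hsub.symm.isBackwardSub hF₂.continuous) hsub.continuous_fst hsub.continuous_snd
    hF₁.continuous_forcing hF₂.continuous_forcing hF₁.neg_forcing_le hF₂.neg_forcing_le hz₁ hz₂
    fun t => (abs_le.1 (hB (z, t))).1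

lemma upperLimit_le_neg_upperLimit_neg (hF₁ : IsForcedHamiltonian F₁ f₁)
    (hF₂ : IsForcedHamiltonian F₂ f₂) {l₀ : ℝ} (hl₀ : 0 < l₀) (hl₀_lt : l₀ < 1)
    (hscale : ∀ l, l₀ ≤ l → l ≤ 1 → ∀ x, ¬(f₁ x = 0 ∧ f₂ x = 0) →
      ∀ p, F₁ x (l • p) ≤ l * F₁ x p ∧ F₂ x (l • p) ≤ l * F₂ x p)
    (hsub : IsPeriodicSub (fun x p => F₁ x p - f₁ x) (fun x p => F₂ x p - f₂ x) u₁ u₂)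
    (hV : ErgSub (fun x p => F₁ x p - f₁ x) (fun x p => F₂ x p - f₂ x)
      (upperLimit u₁) (upperLimit u₂) 0)
    (hW : ErgSuper (fun x p => F₁ x p - f₁ x) (fun x p => F₂ x p - f₂ x)
      (fun x => -upperLimit (fun q => -u₁ q) x) (fun x => -upperLimit (fun q => -u₂ q) x) 0)
    {K₁ K₂ : NNReal} (hK₁ : LipschitzWith K₁ (upperLimit u₁))
    (hK₂ : LipschitzWith K₂ (upperLimit u₂))
    (hW₁ : Continuous (upperLimit fun q => -u₁ q)) (hW₂ : Continuous (upperLimit fun q => -u₂ q))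
    (hB : ∀ q, |u₁ q| ≤ B) (x : En n) :
    upperLimit u₁ x ≤ -upperLimit (fun q => -u₁ q) x ∧
      upperLimit u₂ x ≤ -upperLimit (fun q => -u₂ q) x := by
  refine hV.le_of_le_on_zeros hW hF₁.continuous_kinetic hF₂.continuous_kinetic
    hF₁.continuous_forcing hF₂.continuous_forcing
    (fun x => ⟨hF₁.forcing_nonneg x, hF₂.forcing_nonneg x⟩) hK₁ hK₂ hW₁.neg hW₂.neg
    hsub.periodic_fst.upperLimit hsub.periodic_snd.upperLimit
    (fun x k => congrArg Neg.neg (hsub.periodic_fst.neg.upperLimit x k))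
    (fun x k => congrArg Neg.neg (hsub.periodic_snd.neg.upperLimit x k)) hl₀ hl₀_lt hscale
    (fun z hz₁ hz₂ => ?_) x
  obtain ⟨m, hm₁, hm₂⟩ := hF₁.exists_tendsto_of_common_zero hF₂ hsub hB hz₁ hz₂
  exact ⟨(upperLimit_eq_neg_upperLimit_neg_of_tendsto hm₁).le,
    (upperLimit_eq_neg_upperLimit_neg_of_tendsto hm₂).le⟩

lemma exists_ergSolution_unifTendsTo (hF₁ : IsForcedHamiltonian F₁ f₁)
    (hF₂ : IsForcedHamiltonian F₂ f₂) {l₀ : ℝ} (hl₀ : 0 < l₀) (hl₀_lt : l₀ < 1)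
    (hscale : ∀ l, l₀ ≤ l → l ≤ 1 → ∀ x, ¬(f₁ x = 0 ∧ f₂ x = 0) →
      ∀ p, F₁ x (l • p) ≤ l * F₁ x p ∧ F₂ x (l • p) ≤ l * F₂ x p)
    (hsub : IsPeriodicSub (fun x p => F₁ x p - f₁ x) (fun x p => F₂ x p - f₂ x) u₁ u₂)
    (hsuper : IsPeriodicSub (fun x p => -(F₁ x (-p) - f₁ x)) (fun x p => -(F₂ x (-p) - f₂ x))
      (fun q => -u₁ q) fun q => -u₂ q)
    (hB₁ : ∀ q, |u₁ q| ≤ B) (hB₂ : ∀ q, |u₂ q| ≤ B) :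
    ∃ v₁ v₂ : En n → ℝ, ZPeriodic v₁ ∧ ZPeriodic v₂ ∧
      ErgSolution (fun x p => F₁ x p - f₁ x) (fun x p => F₂ x p - f₂ x) v₁ v₂ 0 ∧
      UnifTendsTo u₁ v₁ ∧ UnifTendsTo u₂ v₂ := by
  obtain ⟨C₁, hC₁⟩ := hF₁.exists_forall_neg_le
  obtain ⟨C₂, hC₂⟩ := hF₂.exists_forall_neg_le
  obtain ⟨⟨K₁, hK₁⟩, hbelow₁, hbelow_neg₁⟩ :=
    hsub.lipschitzWith_and_isAsympBelowUpperLimit hF₁.continuous hF₁.coercive hC₁ hB₁ hB₂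
  obtain ⟨⟨K₂, hK₂⟩, hbelow₂, hbelow_neg₂⟩ :=
    hsub.symm.lipschitzWith_and_isAsympBelowUpperLimit hF₂.continuous hF₂.coercive hC₂ hB₂ hB₁
  have hB_neg₁ : ∀ q, |-u₁ q| ≤ B := by simpa only [abs_neg] using hB₁
  have hB_neg₂ : ∀ q, |-u₂ q| ≤ B := by simpa only [abs_neg] using hB₂
  have hV := hsub.ergSub_upperLimit hF₁.continuous hF₂.continuous hB₁ hB₂ hbelow₁ hbelow₂
  have hW : ErgSuper (fun x p => F₁ x p - f₁ x) (fun x p => F₂ x p - f₂ x)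
      (fun x => -upperLimit (fun q => -u₁ q) x) (fun x => -upperLimit (fun q => -u₂ q) x) 0 :=
    .of_neg (hsuper.ergSub_upperLimit hF₁.continuous_reflection hF₂.continuous_reflection
      hB_neg₁ hB_neg₂ hbelow_neg₁ hbelow_neg₂)
  have hVW := hF₁.upperLimit_le_neg_upperLimit_neg hF₂ hl₀ hl₀_lt hscale hsub hV hW hK₁ hK₂
    (hbelow_neg₁.continuous hB_neg₁) (hbelow_neg₂.continuous hB_neg₂) hB₁
  have heq₁ x := (hVW x).1.antisymm (neg_upperLimit_neg_le_upperLimit hB₁ x)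
  have heq₂ x := (hVW x).2.antisymm (neg_upperLimit_neg_le_upperLimit hB₂ x)
  rw [← funext heq₁, ← funext heq₂] at hW
  exact ⟨upperLimit u₁, upperLimit u₂, hsub.periodic_fst.upperLimit, hsub.periodic_snd.upperLimit,
    ⟨hK₁.continuous, hK₂.continuous, hV, hW⟩,
    unifTendsTo_of_upperLimit_eq hB₁ hsub.periodic_fst hbelow₁ hbelow_neg₁ heq₁,
    unifTendsTo_of_upperLimit_eq hB₂ hsub.periodic_snd hbelow₂ hbelow_neg₂ heq₂⟩

end IsForcedHamiltonian

end Convergence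

/-- Convergence Result 1 (Theorem 1.1, Namah–Roquejoffre type case). -/
theorem stmt4 (n : ℕ) (hn : 1 ≤ n)
(F₁ F₂ : En n → En n → ℝ) (f₁ f₂ : En n → ℝ)
    (hF₁cont : Continuous fun q : En n × En n => F₁ q.1 q.2)
    (hF₂cont : Continuous fun q : En n × En n => F₂ q.1 q.2)
    (hF₁per : ZPeriodicH F₁) (hF₂per : ZPeriodicH F₂)
    (hF₁coer : Coercive F₁) (hF₂coer : Coercive F₂)
    (hf₁cont : Continuous f₁) (hf₂cont : Continuous f₂)
    (hf₁per : ZPeriodic f₁) (hf₂per : ZPeriodic f₂)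
    -- (A2)
    (hA2 : ∀ x : En n, 0 ≤ f₁ x ∧ 0 ≤ f₂ x)
    -- (A3)
    (hA3 : ∃ x : En n, f₁ x = 0 ∧ f₂ x = 0)
    -- (A4)
    (hA4 : ∃ lam₀ : ℝ, 0 < lam₀ ∧ lam₀ < 1 ∧
      ∀ lam : ℝ, lam₀ ≤ lam → lam ≤ 1 → ∀ x : En n, ¬(f₁ x = 0 ∧ f₂ x = 0) →
        ∀ p : En n, F₁ x (lam • p) ≤ lam * F₁ x p ∧ F₂ x (lam • p) ≤ lam * F₂ x p)
    -- (A5)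
    (hA5 : (∀ (x p : En n), 0 ≤ F₁ x p ∧ 0 ≤ F₂ x p) ∧ ∀ x : En n, F₁ x 0 = 0 ∧ F₂ x 0 = 0)
    (u₀₁ u₀₂ : En n → ℝ) (hu₀₁ : Continuous u₀₁) (hu₀₂ : Continuous u₀₂)
    (hu₀₁per : ZPeriodic u₀₁) (hu₀₂per : ZPeriodic u₀₂)
    (u₁ u₂ : En n × ℝ → ℝ) (hu₁per : ZPeriodicST u₁) (hu₂per : ZPeriodicST u₂)
    (hsol : SysSolution (fun x p => F₁ x p - f₁ x) (fun x p => F₂ x p - f₂ x) u₀₁ u₀₂ u₁ u₂) :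
    ∃ v₁ v₂ : En n → ℝ, ZPeriodic v₁ ∧ ZPeriodic v₂ ∧
      ErgSolution (fun x p => F₁ x p - f₁ x) (fun x p => F₂ x p - f₂ x) v₁ v₂ 0 ∧
      UnifTendsTo u₁ v₁ ∧ UnifTendsTo u₂ v₂ := by
  obtain ⟨lam₀, hlam₀, hlam₀_lt, hscale⟩ := hA4
  obtain ⟨z, hz₁, hz₂⟩ := hA3
  have hHam₁ : IsForcedHamiltonian F₁ f₁ := ⟨hF₁cont, hF₁coer, fun x p => (hA5.1 x p).1,
    fun x => (hA5.2 x).1, hf₁cont, hf₁per, fun x => (hA2 x).1⟩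
  have hHam₂ : IsForcedHamiltonian F₂ f₂ := ⟨hF₂cont, hF₂coer, fun x p => (hA5.1 x p).2,
    fun x => (hA5.2 x).2, hf₂cont, hf₂per, fun x => (hA2 x).2⟩
  have hsub := hsol.isPeriodicSub_clampTime hu₁per hu₂per
  have hsuper := hsol.isPeriodicSub_neg_clampTime hu₁per hu₂per
  obtain ⟨B, hB₁, hB₂⟩ := hHam₁.exists_forall_abs_clampTime_le hHam₂ hsub hsuper hz₁ hz₂
  obtain ⟨v₁, v₂, hv₁per, hv₂per, hv, hlim₁, hlim₂⟩ :=
    hHam₁.exists_ergSolution_unifTendsTo hHam₂ hlam₀ hlam₀_lt hscale hsub hsuper hB₁ hB₂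
  exact ⟨v₁, v₂, hv₁per, hv₂per, hv, hlim₁.of_clampTime, hlim₂.of_clampTime⟩
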